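/- Let (ρ, u) be a weak solution of the stationary isentropic Navier–Stokes system on ℝ³ with exponent γ ≥ 6 and potential G ∈ D₀^{1,q}(ℝ³) for some q with 6γ/(5γ−6) ≤ q ≤ 3/2. If ρ ∈ L⁶(ℝ³) ∩ L^γ(ℝ³), then u = 0 almost everywhere. -/

import Mathlib

noncomputable section

open MeasureTheory Metric Filter Topology Set

/-- Three-dimensional Euclidean space. -/
abbrev E3 : Type := EuclideanSpace ℝ (Fin 3)

/-- Partial derivative of a scalar function in the `i`-th coordinate direction. -/
def pd (f : E3 → ℝ) (i : Fin 3) : E3 → ℝ :=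
  fun x => fderiv ℝ f x (EuclideanSpace.single i 1)

/-- Classical gradient matrix of a vector field: `(tgrad φ x) i j = ∂_j φ_i (x)`. -/
def tgrad (φ : E3 → Fin 3 → ℝ) (x : E3) : Fin 3 → Fin 3 → ℝ :=
  fun i j => pd (fun y => φ y i) j x

/-- Smooth compactly supported scalar test function with support in `Ω`. -/
def IsTest (Ω : Set E3) (φ : E3 → ℝ) : Prop :=
  ContDiff ℝ ((⊤ : ℕ∞) : WithTop ℕ∞) φ ∧ HasCompactSupport φ ∧ tsupport φ ⊆ Ω

/-- `C^n` compactly supported vector-valued test function with support in `Ω`. -/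
def IsTestVec (n : WithTop ℕ∞) (Ω : Set E3) (φ : E3 → Fin 3 → ℝ) : Prop :=
  ContDiff ℝ n φ ∧ HasCompactSupport φ ∧ tsupport φ ⊆ Ω

/-- The Newtonian viscous stress tensor
`S(M) = μ (M + Mᵗ - (2/3) (tr M) I) + η (tr M) I`. -/
def Smat (μ η : ℝ) (M : Fin 3 → Fin 3 → ℝ) : Fin 3 → Fin 3 → ℝ :=
  fun i j =>
    μ * (M i j + M j i - (2 / 3) * (∑ k, M k k) * (if i = j then (1 : ℝ) else 0))
      + η * (∑ k, M k k) * (if i = j then (1 : ℝ) else 0)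

/-- `dG` is the weak gradient of the scalar function `G` on `Ω`. -/
def HasWeakGradOn (Ω : Set E3) (G : E3 → ℝ) (dG : E3 → Fin 3 → ℝ) : Prop :=
  ∀ φ : E3 → ℝ, IsTest Ω φ → ∀ i : Fin 3,
    ∫ x in Ω, G x * pd φ i x = - ∫ x in Ω, dG x i * φ x

/-- `du` is the weak gradient (Jacobian) of the vector field `u` on `Ω`. -/
def HasWeakGradVecOn (Ω : Set E3) (u : E3 → Fin 3 → ℝ) (du : E3 → Fin 3 → Fin 3 → ℝ) : Prop :=
  ∀ φ : E3 → ℝ, IsTest Ω φ → ∀ i j : Fin 3,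
    ∫ x in Ω, u x i * pd φ j x = - ∫ x in Ω, du x i j * φ x

/-- `u ∈ D₀^{1,2}(Ω; ℝ³)` with weak gradient `du`: `u` is locally integrable on `Ω`, its weak
gradient belongs to `L²(Ω)`, and `u` can be approximated by smooth compactly supported fields
`uₙ` with `∇uₙ → ∇u` in `L²(Ω)` and `uₙ → u` in `L⁶(Ω)`. -/
def MemD012 (Ω : Set E3) (u : E3 → Fin 3 → ℝ) (du : E3 → Fin 3 → Fin 3 → ℝ) : Prop :=
  LocallyIntegrableOn u Ω volume ∧
  HasWeakGradVecOn Ω u du ∧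
  MemLp du 2 (volume.restrict Ω) ∧
  ∃ un : ℕ → E3 → Fin 3 → ℝ,
    (∀ n, IsTestVec ((⊤ : ℕ∞) : WithTop ℕ∞) Ω (un n)) ∧
    Tendsto (fun n => eLpNorm (fun x => tgrad (un n) x - du x) 2 (volume.restrict Ω))
      atTop (𝓝 0) ∧
    Tendsto (fun n => eLpNorm (fun x => un n x - u x) 6 (volume.restrict Ω)) atTop (𝓝 0)

/-- `G ∈ D₀^{1,q}(Ω)` with weak gradient `dG`. -/
def MemD01q (Ω : Set E3) (G : E3 → ℝ) (dG : E3 → Fin 3 → ℝ) (q : ℝ) : Prop :=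
  HasWeakGradOn Ω G dG ∧
  MemLp dG (ENNReal.ofReal q) (volume.restrict Ω) ∧
  ∃ Gn : ℕ → E3 → ℝ,
    (∀ n, IsTest Ω (Gn n)) ∧
    Tendsto (fun n =>
        eLpNorm (fun x => (fun i => pd (Gn n) i x) - dG x) (ENNReal.ofReal q)
          (volume.restrict Ω)) atTop (𝓝 0) ∧
    ∀ K : Set E3, IsCompact K → K ⊆ Ω →
      Tendsto (fun n => ∫ x in K, |Gn n x - G x|) atTop (𝓝 0)

/-- `G ∈ W^{1,∞}(Ω)` with weak gradient `dG`: both `G` and `∇G` are essentially bounded. -/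
def MemW1inf (Ω : Set E3) (G : E3 → ℝ) (dG : E3 → Fin 3 → ℝ) : Prop :=
  HasWeakGradOn Ω G dG ∧
  MemLp G ⊤ (volume.restrict Ω) ∧ MemLp dG ⊤ (volume.restrict Ω)

/-- Weak solution `(ρ, u)` (with weak gradient `du` of `u` and weak gradient `dG` of `G`) of the
stationary barotropic Navier–Stokes system
`div(ρu) = 0`, `div(ρ u⊗u) + ∇p(ρ) − div S(∇u) = ρ∇G` on `Ω` with no-slip boundary condition. -/
structure WeakSolution (Ω : Set E3) (μ η : ℝ) (p : ℝ → ℝ)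
    (G : E3 → ℝ) (dG : E3 → Fin 3 → ℝ)
    (ρ : E3 → ℝ) (u : E3 → Fin 3 → ℝ) (du : E3 → Fin 3 → Fin 3 → ℝ) : Prop where
  aemeas_ρ : AEMeasurable ρ volume
  aemeas_u : AEMeasurable u volume
  weakGrad_G : HasWeakGradOn Ω G dG
  ρ_nonneg : ∀ᵐ x ∂(volume.restrict Ω), 0 ≤ ρ x
  ρu_locInt : LocallyIntegrableOn (fun x => fun i => ρ x * u x i) (closure Ω) volume
  mass : ∀ φ : E3 → ℝ, ContDiff ℝ ((⊤ : ℕ∞) : WithTop ℕ∞) φ → HasCompactSupport φ →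
    ∫ x in Ω, ρ x * (∑ i, u x i * pd φ i x) = 0
  ρ_locInt : LocallyIntegrableOn ρ Ω volume
  ρu2_locInt : LocallyIntegrableOn (fun x => ρ x * (∑ i, (u x i) ^ 2)) Ω volume
  pρ_locInt : LocallyIntegrableOn (fun x => p (ρ x)) Ω volume
  ρdG_locInt : LocallyIntegrableOn (fun x => fun i => ρ x * dG x i) Ω volume
  u_D012 : MemD012 Ω u du
  momentum : ∀ φ : E3 → Fin 3 → ℝ, IsTestVec 1 Ω φ →
    ∫ x in Ω, ((∑ i, ∑ j, ρ x * u x i * u x j * tgrad φ x i j)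
        + p (ρ x) * (∑ i, tgrad φ x i i))
      = (∫ x in Ω, ∑ i, ∑ j, Smat μ η (du x) i j * tgrad φ x i j)
        - ∫ x in Ω, ∑ i, ρ x * dG x i * φ x i

/-- Weak solution of the stationary isentropic Navier–Stokes system on `ℝ³`
with pressure `p(ρ) = ρ^γ`. -/
def IsentropicWeakSolution (μ η γ : ℝ) (G : E3 → ℝ) (dG : E3 → Fin 3 → ℝ)
    (ρ : E3 → ℝ) (u : E3 → Fin 3 → ℝ) (du : E3 → Fin 3 → Fin 3 → ℝ) : Prop :=
  WeakSolution univ μ η (fun s => s ^ γ) G dG ρ u du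

/-- The `L^r` norm of a scalar function on a set. -/
def lpNormOn (f : E3 → ℝ) (r : ℝ) (s : Set E3) : ℝ :=
  (∫ x in s, |f x| ^ r) ^ (1 / r)

/-- Euclidean norm of a vector in `ℝ³` (represented as `Fin 3 → ℝ`). -/
def vnorm (v : Fin 3 → ℝ) : ℝ := Real.sqrt (∑ i, (v i) ^ 2)

/-- The `L^r` norm of a vector field on a set. -/
def vecLpNormOn (u : E3 → Fin 3 → ℝ) (r : ℝ) (s : Set E3) : ℝ :=
  (∫ x in s, (vnorm (u x)) ^ r) ^ (1 / r)

/-- The exponent `f(α, γ)` from the higher-integrability propositions. -/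
def fExp (α γ : ℝ) : ℝ :=
  if 6 ≤ γ then
    (if (2 * γ - 3) / (γ * (γ - 1)) ≤ α then α - 3 / (2 * γ)
     else α / γ + 1 / (2 * γ) - 3 / γ ^ 2)
  else
    (if 3 / (2 * (γ - 1)) ≤ α then α - 3 / (2 * γ)
     else if 1 / (2 * (γ - 1)) ≤ α then α / γ
     else α / γ ^ 2 + 1 / (2 * γ ^ 2))

/-- The exponent `g(α, β, γ)`. -/
def gExp (α β γ : ℝ) : ℝ :=
  if fExp α γ ≤ (γ - 3) / (γ * (3 * γ - 5)) then
    γ * (1 - fExp α γ) * (6 - β) / (3 * β * (γ - 1))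
  else (1 - γ * fExp α γ) * (6 - β) / (2 * β)

open scoped ENNReal NNReal


lemma aux_tendsto_eLpNorm_mul {p q r : ℝ≥0∞} [ENNReal.HolderTriple p q r] {f g : E3 → ℝ}
    {gn : ℕ → E3 → ℝ} (hf : MemLp f p) (hg : MemLp g q) (hgn : ∀ n, MemLp (gn n) q)
    (h : Tendsto (fun n => eLpNorm (fun x => gn n x - g x) q volume) atTop (𝓝 0)) :
    Tendsto (fun n => eLpNorm (fun x => f x * gn n x - f x * g x) r volume) atTop (𝓝 0) := by
  have h1 : Tendsto (fun n => eLpNorm f p volume * eLpNorm (fun x => gn n x - g x) q volume)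
      atTop (𝓝 0) := by
    have := ENNReal.Tendsto.const_mul (a := eLpNorm f p volume) h (Or.inr hf.2.ne)
    simpa using this
  refine tendsto_of_tendsto_of_tendsto_of_le_of_le tendsto_const_nhds h1 (fun _ => zero_le) ?_
  intro n
  have := eLpNorm_smul_le_mul_eLpNorm (p := p) (q := q) (r := r) (μ := volume)
    (f := fun x => gn n x - g x) (φ := f) ((hgn n).sub hg).1 hf.1
  have e : (fun x => f x * gn n x - f x * g x) = f • (fun x => gn n x - g x) := by
    ext x; simp [mul_sub]
  dsimp only; rw [e]; exact this

lemma aux_tendsto_int_of_L1 {f : E3 → ℝ} {fn : ℕ → E3 → ℝ} (hf : Integrable f)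
    (hfn : ∀ n, Integrable (fn n))
    (h : Tendsto (fun n => eLpNorm (fun x => fn n x - f x) 1 volume) atTop (𝓝 0)) :
    Tendsto (fun n => ∫ x, fn n x) atTop (𝓝 (∫ x, f x)) :=
  tendsto_integral_of_L1' f hf.1 (Eventually.of_forall hfn) h

lemma aux_tendsto_int_mul {p q : ℝ≥0∞} [ENNReal.HolderTriple p q 1] {f g : E3 → ℝ}
    {fn gn : ℕ → E3 → ℝ} (hf : MemLp f p) (hg : MemLp g q) (hfn : ∀ n, MemLp (fn n) p)
    (hgn : ∀ n, MemLp (gn n) q)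
    (h1 : Tendsto (fun n => eLpNorm (fun x => fn n x - f x) p volume) atTop (𝓝 0))
    (h2 : Tendsto (fun n => eLpNorm (fun x => gn n x - g x) q volume) atTop (𝓝 0)) :
    Tendsto (fun n => ∫ x, fn n x * gn n x) atTop (𝓝 (∫ x, f x * g x)) := by
  have I : ∀ {a b : E3 → ℝ}, MemLp a p → MemLp b q → Integrable (fun x => a x * b x) := by
    intro a b ha hb
    exact memLp_one_iff_integrable.1 (hb.mul (r := 1) ha)
  apply aux_tendsto_int_of_L1 (I hf hg) (fun n => I (hfn n) (hgn n))
  have h3 : Tendsto (fun n => eLpNorm (fun x => fn n x - f x) p volume *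
      eLpNorm (fun x => gn n x - g x) q volume +
      (eLpNorm (fun x => fn n x - f x) p volume * eLpNorm g q volume +
      eLpNorm f p volume * eLpNorm (fun x => gn n x - g x) q volume)) atTop (𝓝 0) := by
    have a1 := ENNReal.Tendsto.const_mul (a := eLpNorm f p volume) h2 (Or.inr hf.2.ne)
    have a2 := ENNReal.Tendsto.mul_const (b := eLpNorm g q volume) h1 (Or.inr hg.2.ne)
    have a3 := ENNReal.Tendsto.mul h1 (Or.inr ENNReal.zero_ne_top) h2 (Or.inr ENNReal.zero_ne_top)
    simpa using a3.add (a2.add a1)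
  refine tendsto_of_tendsto_of_tendsto_of_le_of_le tendsto_const_nhds h3 (fun _ => zero_le) ?_
  intro n
  have B : ∀ {a b : E3 → ℝ}, MemLp a p → MemLp b q →
      eLpNorm (a • b) 1 volume ≤ eLpNorm a p volume * eLpNorm b q volume := by
    intro a b ha hb
    exact eLpNorm_smul_le_mul_eLpNorm hb.1 ha.1
  have e : (fun x => fn n x * gn n x - f x * g x) =
      (fun x => fn n x - f x) • (fun x => gn n x - g x) +
      ((fun x => fn n x - f x) • g + f • (fun x => gn n x - g x)) := by
    ext x; simp; ring
  have d1 := (hfn n).sub hf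
  have d2 := (hgn n).sub hg
  dsimp only
  rw [e]
  have m1 : AEStronglyMeasurable ((fun x => fn n x - f x) • (fun x => gn n x - g x)) volume :=
    d1.1.smul d2.1
  have m2 : AEStronglyMeasurable ((fun x => fn n x - f x) • g) volume := d1.1.smul hg.1
  have m3 : AEStronglyMeasurable (f • (fun x => gn n x - g x)) volume := hf.1.smul d2.1
  refine (eLpNorm_add_le m1 (m2.add m3) le_rfl).trans ?_
  gcongr
  · exact B d1 d2
  · refine (eLpNorm_add_le m2 m3 le_rfl).trans ?_
    gcongr
    · exact B d1 hg
    · exact B hf d2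

/-! ### partial derivatives -/

lemma pd_contDiff {f : E3 → ℝ} {n m : WithTop ℕ∞} (hf : ContDiff ℝ n f) (h : m + 1 ≤ n) (i : Fin 3) :
    ContDiff ℝ m (pd f i) :=
  (hf.fderiv_right h).clm_apply contDiff_const

lemma pd_continuous {f : E3 → ℝ} (hf : ContDiff ℝ 1 f) (i : Fin 3) : Continuous (pd f i) :=
  (pd_contDiff (m := 0) hf (by simp) i).continuous

lemma pd_hasCompactSupport {f : E3 → ℝ} (hf : HasCompactSupport f) (i : Fin 3) :
    HasCompactSupport (pd f i) :=
  hf.fderiv_apply ℝ _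

lemma pd_mul {f g : E3 → ℝ} (hf : ContDiff ℝ 1 f) (hg : ContDiff ℝ 1 g) (i : Fin 3) (x : E3) :
    pd (fun y => f y * g y) i x = f x * pd g i x + g x * pd f i x := by
  unfold pd
  have h1 : DifferentiableAt ℝ f x := hf.differentiable (by simp) x
  have h2 : DifferentiableAt ℝ g x := hg.differentiable (by simp) x
  rw [fderiv_fun_mul h1 h2]; simp

lemma pd_ibp {f g : E3 → ℝ} (hf : ContDiff ℝ 1 f) (hg : ContDiff ℝ 1 g)
    (h : HasCompactSupport f) (i : Fin 3) :
    ∫ x, f x * pd g i x = - ∫ x, pd f i x * g x := by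
  have c1 : Continuous (fun x => pd f i x * g x) := (pd_continuous hf i).mul hg.continuous
  have c2 : Continuous (fun x => f x * pd g i x) := hf.continuous.mul (pd_continuous hg i)
  have c3 : Continuous (fun x => f x * g x) := hf.continuous.mul hg.continuous
  exact integral_mul_fderiv_eq_neg_fderiv_mul_of_integrable
    (c1.integrable_of_hasCompactSupport (pd_hasCompactSupport h i).mul_right)
    (c2.integrable_of_hasCompactSupport h.mul_right)
    (c3.integrable_of_hasCompactSupport h.mul_right)
    (fun x _ => hf.differentiable (by simp) x) (fun x _ => hg.differentiable (by simp) x)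

lemma fderiv_norm_le_sum_pd (f : E3 → ℝ) (x : E3) :
    ‖fderiv ℝ f x‖ ≤ ∑ i, |pd f i x| := by
  refine ContinuousLinearMap.opNorm_le_bound _ (by positivity) fun v => ?_
  have hv : v = ∑ i, v i • EuclideanSpace.single i (1 : ℝ) := by
    ext j; simp [Fin.sum_univ_three]; fin_cases j <;> simp
  conv_lhs => rw [hv]
  rw [map_sum, Finset.sum_mul]
  refine (norm_sum_le _ _).trans (Finset.sum_le_sum fun i _ => ?_)
  rw [map_smul, norm_smul, mul_comm]
  exact mul_le_mul_of_nonneg_left (PiLp.norm_apply_le v i) (abs_nonneg _)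

lemma pd_abs_le (f : E3 → ℝ) (x : E3) (i : Fin 3) : |pd f i x| ≤ ‖fderiv ℝ f x‖ := by
  have := (fderiv ℝ f x).le_opNorm (EuclideanSpace.single i (1 : ℝ))
  simpa [pd] using this

lemma gns_E3 : ∃ C : ℝ≥0, ∀ v : E3 → ℝ, ContDiff ℝ 1 v → HasCompactSupport v →
    eLpNorm v 6 volume ≤ C * ∑ i, eLpNorm (pd v i) 2 volume := by
  refine ⟨SNormLESNormFDerivOfEqConst ℝ (volume : Measure E3) 2, fun v hv hc => ?_⟩
  have h := eLpNorm_le_eLpNorm_fderiv_of_eq (μ := (volume : Measure E3)) (p := 2) (p' := 6) hv hc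
    (by norm_num) (by simp) (by simp; norm_num)
  refine (show eLpNorm v 6 volume ≤ _ from h).trans ?_
  refine mul_le_mul le_rfl ?_ zero_le zero_le
  have h2 : eLpNorm (fderiv ℝ v) 2 volume ≤ eLpNorm (∑ i, fun x => |pd v i x|) 2 volume := by
    refine eLpNorm_mono_real fun x => ?_
    simpa using fderiv_norm_le_sum_pd v x
  refine h2.trans ?_
  refine (eLpNorm_sum_le (fun i _ => ?_) (by norm_num)).trans ?_
  · exact (pd_continuous hv i).abs.aestronglyMeasurable
  · refine Finset.sum_le_sum fun i _ => ?_
    exact le_of_eq (eLpNorm_congr_norm_ae (Eventually.of_forall fun x => by simp))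


/-! ### convolution -/

lemma le_inf_aux (n : ℕ∞) : (n : WithTop ℕ∞) ≤ ((⊤ : ℕ∞) : WithTop ℕ∞) :=
  WithTop.coe_le_coe.2 le_top

lemma two_le_inf_aux : (1 : WithTop ℕ∞) + 1 ≤ ((⊤ : ℕ∞) : WithTop ℕ∞) := le_inf_aux (1 + 1)

/-- scalar convolution -/
def cv (h k : E3 → ℝ) (x : E3) : ℝ := ∫ t, h t * k (x - t)

lemma cv_eq (h k : E3 → ℝ) :
    cv h k = MeasureTheory.convolution h k (ContinuousLinearMap.mul ℝ ℝ) volume := rfl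

lemma cv_integrable {h k : E3 → ℝ} (hh : LocallyIntegrable h) (hk : Continuous k)
    (hc : HasCompactSupport k) (x : E3) : Integrable (fun t => h t * k (x - t)) :=
  hc.convolutionExists_right (ContinuousLinearMap.mul ℝ ℝ) hh hk x

lemma cv_contDiff {h k : E3 → ℝ} {n : ℕ∞} (hh : LocallyIntegrable h) (hk : ContDiff ℝ n k)
    (hc : HasCompactSupport k) : ContDiff ℝ n (cv h k) :=
  hc.contDiff_convolution_right (ContinuousLinearMap.mul ℝ ℝ) hh hk

lemma cv_pd {h k : E3 → ℝ} (hh : LocallyIntegrable h) (hk : ContDiff ℝ 1 k)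
    (hc : HasCompactSupport k) (i : Fin 3) : pd (cv h k) i = cv h (pd k i) := by
  ext x
  have H := hc.hasFDerivAt_convolution_right (ContinuousLinearMap.mul ℝ ℝ) hh hk x
  unfold pd
  rw [cv_eq, H.fderiv]
  have I := (hc.fderiv ℝ).convolutionExists_right
    ((ContinuousLinearMap.mul ℝ ℝ).precompR E3) hh (hk.continuous_fderiv (by simp)) x
  unfold MeasureTheory.convolution
  rw [ContinuousLinearMap.integral_apply I]
  rfl

set_option maxHeartbeats 1000000 in
lemma cv_tendsto_zero {p q : ℝ≥0∞} [ENNReal.HolderTriple p q 1] (hp : p ≠ ∞) {h k : E3 → ℝ}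
    (hp1 : 1 ≤ p)
    (hh : MemLp h p) (hk : Continuous k) (hc : HasCompactSupport k) :
    Tendsto (cv h k) (cocompact E3) (𝓝 0) := by
  have hkq : MemLp k q := hk.memLp_of_hasCompactSupport hc
  rw [Metric.tendsto_nhds]
  intro ε hε
  obtain ⟨δ, hδ, hδ2⟩ : ∃ δ : ℝ≥0∞, δ ≠ 0 ∧ δ * eLpNorm k q volume < ENNReal.ofReal ε := by
    have : Tendsto (fun δ : ℝ≥0∞ => δ * eLpNorm k q volume) (𝓝[>] 0) (𝓝 0) := by
      have := ENNReal.Tendsto.mul_const (b := eLpNorm k q volume)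
        (tendsto_id (x := 𝓝 (0:ℝ≥0∞))) (Or.inr hkq.2.ne)
      simp only [zero_mul, id] at this
      exact this.mono_left nhdsWithin_le_nhds
    have h2 := this.eventually (gt_mem_nhds (ENNReal.ofReal_pos.2 hε))
    obtain ⟨δ, h3, h4⟩ := (h2.and self_mem_nhdsWithin).exists
    exact ⟨δ, h4.ne', h3⟩
  obtain ⟨c, hcc, hle, hcont, hcm⟩ := hh.exists_hasCompactSupport_eLpNorm_sub_le hp hδ
  have hs : HasCompactSupport (cv c k) := hcc.convolution (ContinuousLinearMap.mul ℝ ℝ) hc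
  have hsz : ∀ᶠ x in cocompact E3, cv c k x = 0 := by
    have := hs.isCompact.compl_mem_cocompact
    filter_upwards [this] with x hx
    exact image_eq_zero_of_notMem_tsupport hx
  filter_upwards [hsz] with x hx
  have e : cv h k x = ∫ t, (h t - c t) * k (x - t) := by
    have e1 := cv_integrable (hh.locallyIntegrable hp1) hk hc x
    have e2 := cv_integrable hcont.locallyIntegrable hk hc x
    have : ∫ t, (h t - c t) * k (x - t) = cv h k x - cv c k x := by
      unfold cv
      rw [← integral_sub e1 e2]
      congr 1; ext t; ring
    rw [this, hx, sub_zero]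
  rw [dist_zero_right, e]
  have mp : MeasurePreserving (fun t : E3 => x - t) volume volume :=
    volume.measurePreserving_sub_left x
  have hk2 : eLpNorm (fun t => k (x - t)) q volume = eLpNorm k q volume :=
    eLpNorm_comp_measurePreserving hkq.1 mp
  have hk3 : MemLp (fun t => k (x - t)) q volume := hkq.comp_measurePreserving mp
  have key := eLpNorm_smul_le_mul_eLpNorm (p := p) (q := q) (r := 1) (μ := volume)
    (f := fun t => k (x - t)) (φ := h - c) hk3.1 (hh.sub hcm).1
  have I : Integrable (fun t => (h t - c t) * k (x - t)) :=
    memLp_one_iff_integrable.1 (hk3.mul (r := 1) (hh.sub hcm))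
  have l1 : ENNReal.ofReal ‖∫ t, (h t - c t) * k (x - t)‖ < ENNReal.ofReal ε := by
    calc _ ≤ ENNReal.ofReal (∫ t, ‖(h t - c t) * k (x - t)‖) :=
          ENNReal.ofReal_le_ofReal (norm_integral_le_integral_norm _)
      _ = ∫⁻ t, ‖(h t - c t) * k (x - t)‖ₑ := by
          rw [ofReal_integral_norm_eq_lintegral_enorm I]
      _ = eLpNorm ((h - c) • fun t => k (x - t)) 1 volume := by
          rw [eLpNorm_one_eq_lintegral_enorm]; simp
      _ ≤ _ := key
      _ ≤ δ * eLpNorm k q volume := by rw [hk2]; gcongr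
      _ < _ := hδ2
  exact (ENNReal.ofReal_lt_ofReal_iff hε).1 l1

/-! ### Liouville -/

lemma second_deriv_nonpos {g g' : ℝ → ℝ} {c : ℝ} (h1 : ∀ t, HasDerivAt g (g' t) t)
    (h2 : HasDerivAt g' c 0) (hm : IsLocalMax g 0) : c ≤ 0 := by
  by_contra hc
  push Not at hc
  have e1 : deriv g = g' := funext fun t => (h1 t).deriv
  have hmin : IsLocalMin g 0 := by
    apply isLocalMin_of_deriv_deriv_pos
    · rw [e1, h2.deriv]; exact hc
    · exact hm.deriv_eq_zero
    · exact (h1 0).continuousAt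
  have hconst : ∀ᶠ t in 𝓝 (0:ℝ), g t = g 0 := by
    filter_upwards [hm, hmin] with t a b
    exact le_antisymm a b
  have hd : ∀ᶠ t in 𝓝 (0:ℝ), g' t = 0 := by
    filter_upwards [hconst.eventually_nhds] with t ht
    have : g =ᶠ[𝓝 t] fun _ => g 0 := ht
    rw [← (h1 t).deriv, this.deriv_eq]; simp
  have : g' =ᶠ[𝓝 0] fun _ => 0 := hd
  have := this.deriv_eq
  rw [h2.deriv] at this
  simp at this
  exact hc.ne' this

lemma line_hasDerivAt {f : E3 → ℝ} (hf : ContDiff ℝ 1 f) (y : E3) (i : Fin 3) (t : ℝ) :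
    HasDerivAt (fun s : ℝ => f (y + s • EuclideanSpace.single i (1:ℝ)))
      (pd f i (y + t • EuclideanSpace.single i (1:ℝ))) t := by
  have h1 : HasFDerivAt f _ (y + t • EuclideanSpace.single i (1:ℝ)) :=
    (hf.differentiable (by simp) _).hasFDerivAt
  have h2 : HasDerivAt (fun s : ℝ => y + s • EuclideanSpace.single i (1:ℝ))
      (EuclideanSpace.single i (1:ℝ)) t := by
    simpa using ((hasDerivAt_id t).smul_const (EuclideanSpace.single i (1:ℝ))).const_add y
  exact h1.comp_hasDerivAt t h2

lemma harmonic_le_zero {f : E3 → ℝ} (hf : ContDiff ℝ 2 f)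
    (hΔ : ∀ x, ∑ i, pd (pd f i) i x = 0) (hlim : Tendsto f (cocompact E3) (𝓝 0)) (x0 : E3) :
    f x0 ≤ 0 := by
  by_contra hx0
  push Not at hx0
  set m := f x0 with hm
  have ev : ∀ᶠ x in cocompact E3, f x < m / 4 := hlim.eventually (gt_mem_nhds (by positivity))
  obtain ⟨K, hK, hK2⟩ := mem_cocompact'.1 ev
  obtain ⟨R0, hR0⟩ := hK.isBounded.subset_closedBall 0
  set R := max (max R0 ‖x0‖) 0 + 1 with hR
  have hRpos : 0 < R := by positivity
  have hRx : ‖x0‖ < R := by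
    have := le_max_left (max R0 ‖x0‖) 0
    have := le_max_right R0 ‖x0‖
    linarith
  have hRout : ∀ x : E3, R ≤ ‖x‖ → f x < m / 4 := by
    intro x hx
    by_contra hcon
    have : x ∈ K := hK2 hcon
    have := hR0 this
    simp at this
    have := le_max_left (max R0 ‖x0‖) 0
    have := le_max_left R0 ‖x0‖
    linarith
  set δ := m / (2 * R ^ 2) with hδ
  have hδpos : 0 < δ := by positivity
  set F : E3 → ℝ := fun x => f x + δ * ‖x‖ ^ 2 with hF
  have hFc : Continuous F := by
    have := hf.continuous
    fun_prop
  obtain ⟨y, hy, hymax⟩ := (isCompact_closedBall (0 : E3) R).exists_isMaxOn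
    ⟨0, by simp [hRpos.le]⟩ hFc.continuousOn
  have hFx0 : F x0 ≤ F y := hymax (by simp [hRx.le])
  have hyR : ‖y‖ < R := by
    by_contra hcon
    push Not at hcon
    have hy' : ‖y‖ = R := le_antisymm (by simpa using hy) hcon
    have h1 := hRout y hcon
    have h2 : F y < m := by
      simp only [hF, hy', hδ]
      have : m / (2 * R ^ 2) * R ^ 2 = m / 2 := by field_simp
      rw [this]; linarith
    have h3 : m ≤ F x0 := by simp only [hF]; rw [← hm]; have := sq_nonneg ‖x0‖; nlinarith
    linarith
  have hloc : IsLocalMax F y := by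
    apply hymax.isLocalMax
    exact closedBall_mem_nhds_of_mem (by simpa using hyR)
  have hi : ∀ i, pd (pd f i) i y + 2 * δ ≤ 0 := by
    intro i
    set e : E3 := EuclideanSpace.single i (1:ℝ) with he
    have hnorm : ∀ t : ℝ, ‖y + t • e‖ ^ 2 = ‖y‖ ^ 2 + 2 * t * y i + t ^ 2 := by
      intro t
      rw [@norm_add_sq_real, inner_smul_right, norm_smul, he]
      simp [EuclideanSpace.inner_single_right]
      ring
    have hg : (fun t : ℝ => F (y + t • e)) =
        fun t => f (y + t • e) + δ * (‖y‖ ^ 2 + 2 * t * y i + t ^ 2) := by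
      ext t; simp only [hF]; rw [hnorm]
    refine second_deriv_nonpos (g := fun t : ℝ => F (y + t • e))
      (g' := fun t => pd f i (y + t • e) + δ * (2 * y i + 2 * t)) ?_ ?_ ?_
    · intro t
      rw [hg]
      refine (line_hasDerivAt (hf.of_le (by norm_num)) y i t).add ?_
      have a1 : HasDerivAt (fun t : ℝ => ‖y‖ ^ 2 + 2 * t * y i + t ^ 2) (2 * y i + 2 * t) t := by
        have b1 := (((hasDerivAt_id t).const_mul 2).mul_const (y i)).const_add (‖y‖ ^ 2)
        have b2 := hasDerivAt_pow 2 t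
        have b3 := b1.add b2
        simp at b3
        exact b3
      exact a1.const_mul δ
    · have a0 := line_hasDerivAt (pd_contDiff (m := 1) hf (by norm_num) i) y i 0
      have a1 : HasDerivAt (fun t : ℝ => δ * (2 * y i + 2 * t)) (δ * 2) 0 := by
        have b1 := (((hasDerivAt_id (0:ℝ)).const_mul 2).const_add (2 * y i)).const_mul δ
        simpa using b1
      have a2 := a0.add a1
      simp only [zero_smul, add_zero] at a2
      rw [mul_comm 2 δ]
      exact a2
    · have hcont : ContinuousAt (fun t : ℝ => y + t • e) 0 := by fun_prop
      have : IsLocalMax F ((fun t : ℝ => y + t • e) 0) := by simpa using hloc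
      exact IsMaxFilter.comp_tendsto (g := fun t : ℝ => y + t • e) this hcont
  have := hΔ y
  have s : ∑ i, (pd (pd f i) i y + 2 * δ) ≤ 0 := Finset.sum_nonpos fun i _ => hi i
  rw [Finset.sum_add_distrib, this] at s
  simp at s
  linarith

lemma pd_neg (f : E3 → ℝ) (i : Fin 3) : pd (fun x => - f x) i = fun x => - pd f i x := by
  ext x; unfold pd; rw [fderiv_fun_neg]; simp

lemma harmonic_vanish {f : E3 → ℝ} (hf : ContDiff ℝ 2 f)
    (hΔ : ∀ x, ∑ i, pd (pd f i) i x = 0) (hlim : Tendsto f (cocompact E3) (𝓝 0)) (x0 : E3) :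
    f x0 = 0 := by
  apply le_antisymm (harmonic_le_zero hf hΔ hlim x0)
  have := harmonic_le_zero (f := fun x => - f x) hf.neg (fun x => by
    have := hΔ x
    simp only [pd_neg, Finset.sum_neg_distrib, this, neg_zero]) (by simpa using hlim.neg) x0
  linarith

lemma liouville_L1_L2 {p g : E3 → ℝ} (hp : MemLp p 1) (hg : MemLp g 2)
    (H : ∀ w : E3 → ℝ, IsTest univ w → ∫ x, p x * ∑ i, pd (pd w i) i x =
      ∫ x, g x * ∑ i, pd (pd w i) i x) : p =ᵐ[volume] g := by
  have lp : LocallyIntegrable p := hp.locallyIntegrable le_rfl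
  have lg : LocallyIntegrable g := hg.locallyIntegrable (by norm_num)
  refine ae_eq_of_integral_contDiff_smul_eq lp lg fun ψ hψ hψc => ?_
  -- reflected test function
  set k : E3 → ℝ := fun z => ψ (-z) with hk
  have hkC : ContDiff ℝ (⊤ : ℕ∞) k := hψ.comp contDiff_neg
  have hkc : HasCompactSupport k := hψc.comp_homeomorph (Homeomorph.neg E3)
  have hk1 : ContDiff ℝ 1 k := hkC.of_le (le_inf_aux _)
  have hk2 : ∀ i, ContDiff ℝ 1 (pd k i) := fun i =>
    pd_contDiff hkC two_le_inf_aux i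
  have key : ∀ x, cv p k x - cv g k x = 0 := by
    refine harmonic_vanish (f := fun x => cv p k x - cv g k x) ?_ ?_ ?_
    · have := (cv_contDiff (n := 2) lp (hkC.of_le (le_inf_aux _)) hkc).sub
        (cv_contDiff (n := 2) lg (hkC.of_le (le_inf_aux _)) hkc)
      exact_mod_cast this
    · intro x
      have d : ∀ i, pd (pd (fun x => cv p k x - cv g k x) i) i x =
          cv p (pd (pd k i) i) x - cv g (pd (pd k i) i) x := by
        intro i
        have s : ∀ k : E3 → ℝ, ContDiff ℝ 1 k → HasCompactSupport k →
            pd (fun x => cv p k x - cv g k x) i =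
            fun x => cv p (pd k i) x - cv g (pd k i) x := by
          intro k h1 h2
          ext x
          rw [← cv_pd lp h1 h2, ← cv_pd lg h1 h2]
          unfold pd
          have a1 := (cv_contDiff (n := 1) lp (by exact_mod_cast h1) h2).differentiable (by simp) x
          have a2 := (cv_contDiff (n := 1) lg (by exact_mod_cast h1) h2).differentiable (by simp) x
          rw [fderiv_fun_sub a1 a2]; simp
        rw [s k hk1 hkc, s _ (hk2 i) (pd_hasCompactSupport hkc i)]
      simp only [d]
      rw [Finset.sum_sub_distrib]
      have I : ∀ {h : E3 → ℝ}, LocallyIntegrable h → ∑ i, cv h (pd (pd k i) i) x =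
          ∫ t, h t * ∑ i, pd (pd k i) i (x - t) := by
        intro h hh
        unfold cv
        rw [← integral_finsetSum]
        · simp only [Finset.mul_sum]
        · intro i _
          exact cv_integrable hh (pd_continuous (hk2 i) i)
            (pd_hasCompactSupport (pd_hasCompactSupport hkc i) i) x
      rw [I lp, I lg]
      set w : E3 → ℝ := fun t => k (x - t) with hw
      have hwT : IsTest univ w := by
        refine ⟨hkC.comp (contDiff_const.sub contDiff_id), ?_, subset_univ _⟩
        exact hkc.comp_homeomorph (Homeomorph.subLeft x)
      have D : ∀ (v : E3 → ℝ) (i : Fin 3), ContDiff ℝ 1 v →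
          pd (fun t => v (x - t)) i = fun t => - pd v i (x - t) := by
        intro v i hv
        ext t
        unfold pd
        have a1 : HasFDerivAt v _ (x - t) := (hv.differentiable (by simp) (x - t)).hasFDerivAt
        have a2 : HasFDerivAt (fun t : E3 => x - t) (- ContinuousLinearMap.id ℝ E3) t :=
          (hasFDerivAt_id t).const_sub x
        have a3 := a1.comp t a2
        rw [show (fun t => v (x - t)) = v ∘ (fun t => x - t) from rfl, a3.fderiv]
        simp
      have DD : ∀ t, ∑ i, pd (pd w i) i t = ∑ i, pd (pd k i) i (x - t) := by
        intro t
        refine Finset.sum_congr rfl fun i _ => ?_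
        rw [hw, D k i hk1, pd_neg, D (pd k i) i (hk2 i)]
        simp
      have := H w hwT
      simp only [DD] at this
      rw [this, sub_self]
    · have a1 := cv_tendsto_zero (p := 1) (q := ∞) (by simp) le_rfl hp hk1.continuous hkc
      have a2 := cv_tendsto_zero (p := 2) (q := 2) (by simp) (by norm_num) hg hk1.continuous hkc
      simpa using a1.sub a2
  have := key 0
  simp only [cv, hk] at this
  simp only [smul_eq_mul, mul_comm (ψ _)]
  simp at this
  linarith


lemma hilbert_repr {W H : Type*} [AddCommGroup W] [Module ℝ W] [NormedAddCommGroup H]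
    [InnerProductSpace ℝ H] [CompleteSpace H] (T : W →ₗ[ℝ] H) (l : W →ₗ[ℝ] ℝ) (C : ℝ)
    (h : ∀ w, |l w| ≤ C * ‖T w‖) : ∃ g : H, ∀ w, l w = inner ℝ g (T w) := by
  have hker : LinearMap.ker T ≤ LinearMap.ker l := by
    intro w hw
    have := h w
    rw [LinearMap.mem_ker.1 hw] at this
    simp at this
    simpa using this
  set f : LinearMap.range T →ₗ[ℝ] ℝ :=
    (LinearMap.ker T).liftQ l hker ∘ₗ T.quotKerEquivRange.symm.toLinearMap with hf
  have hfw : ∀ w, f ⟨T w, LinearMap.mem_range_self T w⟩ = l w := by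
    intro w
    have : T.quotKerEquivRange.symm ⟨T w, LinearMap.mem_range_self T w⟩ =
        (LinearMap.ker T).mkQ w := LinearMap.quotKerEquivRange_symm_apply_image T w _
    simp [hf, this]
  have hb : ∀ v : LinearMap.range T, ‖f v‖ ≤ C * ‖v‖ := by
    rintro ⟨v, w, rfl⟩
    rw [hfw w]; exact h w
  obtain ⟨g, hg, -⟩ := exists_extension_norm_eq (𝕜 := ℝ) (LinearMap.range T) (f.mkContinuous C hb)
  refine ⟨(InnerProductSpace.toDual ℝ H).symm g, fun w => ?_⟩
  rw [InnerProductSpace.toDual_symm_apply]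
  have := hg ⟨T w, LinearMap.mem_range_self T w⟩
  simp only [LinearMap.mkContinuous_apply] at this
  rw [this, hfw]

/-- space of test functions -/
def testSpace : Submodule ℝ (E3 → ℝ) where
  carrier := {w | IsTest univ w}
  add_mem' := by
    rintro a b ⟨ha, ha2, -⟩ ⟨hb, hb2, -⟩
    exact ⟨ha.add hb, ha2.add hb2, subset_univ _⟩
  zero_mem' := ⟨contDiff_const, HasCompactSupport.zero, subset_univ _⟩
  smul_mem' := by
    rintro c a ⟨ha, ha2, -⟩
    exact ⟨contDiff_const.smul ha, ha2.smul_left (f := fun _ => c), subset_univ _⟩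

lemma pd_add {f g : E3 → ℝ} (hf : ContDiff ℝ 1 f) (hg : ContDiff ℝ 1 g) (i : Fin 3) :
    pd (f + g) i = pd f i + pd g i := by
  ext x; unfold pd
  rw [fderiv_add (hf.differentiable (by simp) x) (hg.differentiable (by simp) x)]; simp

lemma pd_smul {f : E3 → ℝ} (c : ℝ) (hf : ContDiff ℝ 1 f) (i : Fin 3) :
    pd (c • f) i = c • pd f i := by
  ext x; unfold pd
  rw [fderiv_const_smul (hf.differentiable (by simp) x)]; simp

lemma IsTest.c1 {w : E3 → ℝ} (hw : IsTest univ w) : ContDiff ℝ 1 w := hw.1.of_le (le_inf_aux _)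
lemma IsTest.c2 {w : E3 → ℝ} (hw : IsTest univ w) : ContDiff ℝ 2 w := hw.1.of_le (le_inf_aux _)

lemma IsTest.pd {w : E3 → ℝ} (hw : IsTest univ w) (i : Fin 3) : IsTest univ (pd w i) :=
  ⟨pd_contDiff hw.1 (by exact_mod_cast le_inf_aux _) i, pd_hasCompactSupport hw.2.1 i, subset_univ _⟩

lemma IsTest.memLp {w : E3 → ℝ} (hw : IsTest univ w) (p : ℝ≥0∞) : MemLp w p :=
  hw.1.continuous.memLp_of_hasCompactSupport hw.2.1

/-- Laplacian -/
def lap (w : E3 → ℝ) : E3 → ℝ := fun x => ∑ i, pd (pd w i) i x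

lemma lap_memLp {w : E3 → ℝ} (hw : IsTest univ w) (p : ℝ≥0∞) : MemLp (lap w) p :=
  memLp_finsetSum _ fun i _ => ((hw.pd i).pd i).memLp p

lemma pressure_L2 {p : E3 → ℝ} (hp : MemLp p 1) (C : ℝ)
    (hC : ∀ w, IsTest univ w → |∫ x, p x * lap w x| ≤ C * (eLpNorm (lap w) 2 volume).toReal) :
    MemLp p 2 := by
  have hT : ∀ w : testSpace, IsTest univ (w : E3 → ℝ) := fun w => w.2
  have lap_add : ∀ a b : testSpace, lap ((a + b : testSpace) : E3 → ℝ) = lap a + lap b := by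
    intro a b
    ext x
    simp only [lap, Submodule.coe_add, Pi.add_apply, ← Finset.sum_add_distrib]
    refine Finset.sum_congr rfl fun i _ => ?_
    rw [pd_add (hT a).c1 (hT b).c1, pd_add ((hT a).pd i).c1 ((hT b).pd i).c1]; rfl
  have lap_smul : ∀ (c : ℝ) (a : testSpace), lap ((c • a : testSpace) : E3 → ℝ) = c • lap a := by
    intro c a
    ext x
    simp only [lap, Submodule.coe_smul, Pi.smul_apply, Finset.smul_sum]
    refine Finset.sum_congr rfl fun i _ => ?_
    rw [pd_smul c (hT a).c1, pd_smul c ((hT a).pd i).c1]; rfl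
  have hI : ∀ w : testSpace, Integrable (fun x => p x * lap w x) := fun w =>
    memLp_one_iff_integrable.1 ((lap_memLp (hT w) ∞).mul (p := 1) (q := ∞) (r := 1) hp)
  let T : testSpace →ₗ[ℝ] Lp ℝ 2 (volume : Measure E3) :=
    { toFun := fun w => (lap_memLp (hT w) 2).toLp (lap w)
      map_add' := by
        intro a b
        rw [← MemLp.toLp_add]
        exact MemLp.toLp_congr _ _ (by rw [lap_add])
      map_smul' := by
        intro c a
        rw [RingHom.id_apply, ← MemLp.toLp_const_smul]
        exact MemLp.toLp_congr _ _ (by rw [lap_smul]) }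
  let l : testSpace →ₗ[ℝ] ℝ :=
    { toFun := fun w => ∫ x, p x * lap w x
      map_add' := by
        intro a b
        rw [← integral_add (hI a) (hI b), lap_add]
        congr 1; ext x; simp; ring
      map_smul' := by
        intro c a
        rw [RingHom.id_apply, lap_smul, smul_eq_mul, ← integral_const_mul]
        congr 1; ext x; simp; ring }
  obtain ⟨g, hg⟩ := hilbert_repr T l C (by
    intro w
    have := hC w (hT w)
    simpa [l, T, Lp.norm_toLp] using this)
  have hgm : MemLp g 2 := Lp.memLp g
  have : p =ᵐ[volume] g := by
    refine liouville_L1_L2 hp hgm fun w hw => ?_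
    have h1 := hg ⟨w, hw⟩
    rw [L2.inner_def] at h1
    simp only [l, T, LinearMap.coe_mk, AddHom.coe_mk] at h1
    refine (show _ = _ from h1).trans ?_
    apply integral_congr_ae
    filter_upwards [(lap_memLp hw 2).coeFn_toLp] with x hx
    simp only [RCLike.inner_apply, conj_trivial]
    rw [hx, mul_comm]; rfl
  exact hgm.ae_eq this.symm

lemma pd_comm {f : E3 → ℝ} (hf : ContDiff ℝ 2 f) (i j : Fin 3) (x : E3) :
    pd (pd f i) j x = pd (pd f j) i x := by
  have hs : IsSymmSndFDerivAt ℝ f x := hf.contDiffAt.isSymmSndFDerivAt (by simp)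
  have hd : DifferentiableAt ℝ (fderiv ℝ f) x :=
    (hf.fderiv_right (m := 1) (by norm_num)).differentiable (by simp) x
  have e : ∀ a b : Fin 3, pd (pd f a) b x = fderiv ℝ (fderiv ℝ f) x
      (EuclideanSpace.single b 1) (EuclideanSpace.single a 1) := by
    intro a b
    unfold pd
    have : HasFDerivAt (fun y => fderiv ℝ f y (EuclideanSpace.single a (1:ℝ))) _ x :=
      hd.hasFDerivAt.clm_apply (hasFDerivAt_const _ x)
    rw [this.fderiv]; simp
  rw [e, e, hs]

lemma pd_swap {f g : E3 → ℝ} (hf : ContDiff ℝ 1 f) (hg : ContDiff ℝ 2 g)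
    (h : HasCompactSupport f) (i j : Fin 3) :
    ∫ x, pd f j x * pd g i x = ∫ x, pd f i x * pd g j x := by
  have h1 := pd_ibp hf (pd_contDiff (m := 1) hg (by norm_num) i) h j
  have h2 := pd_ibp hf (pd_contDiff (m := 1) hg (by norm_num) j) h i
  have h3 : ∫ x, f x * pd (pd g i) j x = ∫ x, f x * pd (pd g j) i x := by
    congr 1; ext x; rw [pd_comm hg]
  linarith

lemma eLpNorm_two_toReal_sq {f : E3 → ℝ} (hf : MemLp f 2) :
    (eLpNorm f 2 volume).toReal ^ 2 = ∫ x, f x ^ 2 := by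
  have := hf.eLpNorm_eq_integral_rpow_norm (by norm_num) (by norm_num)
  rw [this, ENNReal.toReal_ofReal (by positivity)]
  simp only [ENNReal.toReal_ofNat, Real.rpow_ofNat, Real.norm_eq_abs, sq_abs]
  rw [← Real.rpow_natCast, ← Real.rpow_mul (by positivity)]
  norm_num

lemma hess_le_lap {w : E3 → ℝ} (hw : IsTest univ w) (i j : Fin 3) :
    (eLpNorm (pd (pd w i) j) 2 volume).toReal ≤ (eLpNorm (lap w) 2 volume).toReal := by
  refine (sq_le_sq₀ ENNReal.toReal_nonneg ENNReal.toReal_nonneg).1 ?_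
  rw [eLpNorm_two_toReal_sq (((hw.pd i).pd j).memLp 2), eLpNorm_two_toReal_sq (lap_memLp hw 2)]
  have hI : ∀ a b c d, Integrable (fun x => pd (pd w a) b x * pd (pd w c) d x) := fun a b c d =>
    memLp_one_iff_integrable.1
      ((((hw.pd c).pd d).memLp 2).mul (p := 2) (q := 2) (r := 1) (((hw.pd a).pd b).memLp 2))
  have e1 : ∀ a b, ∫ x, pd (pd w a) b x ^ 2 = ∫ x, pd (pd w a) a x * pd (pd w b) b x := by
    intro a b
    rw [← pd_swap (hw.pd a).c1 (hw.pd b).c2 (hw.pd a).2.1 a b]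
    congr 1; ext x; rw [pd_comm hw.c2 b a, sq]
  have e2 : ∫ x, lap w x ^ 2 = ∑ a, ∑ b, ∫ x, pd (pd w a) b x ^ 2 := by
    simp only [e1]
    simp_rw [← integral_finsetSum _ (fun b _ => hI _ _ b b)]
    rw [← integral_finsetSum _ (fun a _ => integrable_finsetSum _ fun b _ => hI a a b b)]
    congr 1; ext x
    simp only [lap, sq, Finset.sum_mul_sum]
  rw [e2]
  have nn : ∀ a b, 0 ≤ ∫ x, pd (pd w a) b x ^ 2 := fun a b => integral_nonneg fun x => sq_nonneg _
  calc _ ≤ ∑ b, ∫ x, pd (pd w i) b x ^ 2 :=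
        Finset.single_le_sum (f := fun b => ∫ x, pd (pd w i) b x ^ 2) (fun b _ => nn i b)
          (Finset.mem_univ j)
    _ ≤ _ := Finset.single_le_sum (f := fun a => ∑ b, ∫ x, pd (pd w a) b x ^ 2)
          (fun a _ => Finset.sum_nonneg fun b _ => nn a b) (Finset.mem_univ i)

lemma abs_integral_mul_le {p q : ℝ≥0∞} [ENNReal.HolderTriple p q 1] {f g : E3 → ℝ}
    (hf : MemLp f p) (hg : MemLp g q) :
    |∫ x, f x * g x| ≤ (eLpNorm f p volume).toReal * (eLpNorm g q volume).toReal := by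
  have I : Integrable (fun x => f x * g x) := memLp_one_iff_integrable.1 (hg.mul (r := 1) hf)
  have key := eLpNorm_smul_le_mul_eLpNorm (p := p) (q := q) (r := 1) (μ := volume) hg.1 hf.1
  rw [← ENNReal.toReal_mul]
  rw [← ENNReal.ofReal_le_iff_le_toReal (ENNReal.mul_ne_top hf.2.ne hg.2.ne)]
  refine le_trans ?_ key
  rw [eLpNorm_one_eq_lintegral_enorm]
  calc _ ≤ ENNReal.ofReal (∫ t, ‖f t * g t‖) :=
          ENNReal.ofReal_le_ofReal (norm_integral_le_integral_norm _)
      _ = ∫⁻ t, ‖f t * g t‖ₑ := by rw [ofReal_integral_norm_eq_lintegral_enorm I]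
      _ ≤ _ := by simp

lemma pressure_L2' {p : E3 → ℝ} (hp : MemLp p 1) {A : Fin 3 → Fin 3 → E3 → ℝ}
    {f : Fin 3 → E3 → ℝ} (hA : ∀ i j, MemLp (A i j) 2) {r : ℝ≥0∞} [ENNReal.HolderTriple r 6 1]
    (hf : ∀ i, MemLp (f i) r)
    (h : ∀ w, IsTest univ w → ∫ x, p x * lap w x =
      (∑ i, ∑ j, ∫ x, A i j x * pd (pd w i) j x) + ∑ i, ∫ x, f i x * pd w i x) : MemLp p 2 := by
  obtain ⟨C0, hC0⟩ := gns_E3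
  refine pressure_L2 hp ((∑ i, ∑ j, (eLpNorm (A i j) 2 volume).toReal) +
    ∑ i, (eLpNorm (f i) r volume).toReal * (C0 * 3)) fun w hw => ?_
  set L := (eLpNorm (lap w) 2 volume).toReal with hL
  rw [h w hw, add_mul]
  refine (abs_add_le _ _).trans (add_le_add ?_ ?_)
  · rw [Finset.sum_mul]
    refine (Finset.abs_sum_le_sum_abs _ _).trans (Finset.sum_le_sum fun i _ => ?_)
    rw [Finset.sum_mul]
    refine (Finset.abs_sum_le_sum_abs _ _).trans (Finset.sum_le_sum fun j _ => ?_)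
    refine (abs_integral_mul_le (hA i j) (((hw.pd i).pd j).memLp 2)).trans ?_
    gcongr
    exact hess_le_lap hw i j
  · rw [Finset.sum_mul]
    refine (Finset.abs_sum_le_sum_abs _ _).trans (Finset.sum_le_sum fun i _ => ?_)
    refine (abs_integral_mul_le (hf i) ((hw.pd i).memLp 6)).trans ?_
    rw [mul_assoc]
    gcongr
    have h1 := hC0 (pd w i) (hw.pd i).c1 (hw.pd i).2.1
    have hfin : ∀ j ∈ Finset.univ, eLpNorm (pd (pd w i) j) 2 volume ≠ ∞ :=
      fun j _ => (((hw.pd i).pd j).memLp 2).2.ne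
    have h2 := ENNReal.toReal_mono (ENNReal.mul_ne_top ENNReal.coe_ne_top
      (ENNReal.sum_ne_top.2 hfin)) h1
    refine h2.trans ?_
    rw [ENNReal.toReal_mul, ENNReal.toReal_sum hfin, mul_assoc]
    simp only [ENNReal.coe_toReal]
    gcongr
    calc _ ≤ ∑ j : Fin 3, L := Finset.sum_le_sum fun j _ => hess_le_lap hw i j
      _ = _ := by simp


/-! ### Minkowski / Jensen -/

lemma lint_jensen {Z : Type*} [MeasurableSpace Z] (ν : Measure Z) [IsFiniteMeasure ν] {p : ℝ}
    (hp : 1 < p) {g : Z → ℝ≥0∞} (hg : AEMeasurable g ν) :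
    (∫⁻ z, g z ∂ν) ^ p ≤ (ν univ) ^ (p - 1) * ∫⁻ z, g z ^ p ∂ν := by
  have hpq := Real.HolderConjugate.conjExponent hp
  have h := ENNReal.lintegral_mul_le_Lp_mul_Lq ν hpq hg (aemeasurable_const (b := (1:ℝ≥0∞)))
  simp only [Pi.mul_apply, mul_one, ENNReal.one_rpow, lintegral_one] at h
  calc (∫⁻ z, g z ∂ν) ^ p ≤ ((∫⁻ z, g z ^ p ∂ν) ^ (1 / p) * ν univ ^ (1 / p.conjExponent)) ^ p :=
        ENNReal.rpow_le_rpow h (by linarith)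
    _ = _ := by
      rw [ENNReal.mul_rpow_of_nonneg _ _ (by linarith), ← ENNReal.rpow_mul, ← ENNReal.rpow_mul,
        mul_comm]
      have h1 : 1 / p * p = 1 := by field_simp
      have h2 : 1 / p.conjExponent * p = p - 1 := by
        unfold Real.conjExponent
        have : p - 1 ≠ 0 := by linarith
        field_simp
      rw [h1, h2, ENNReal.rpow_one]

lemma lemmaJ {Z : Type*} [MeasurableSpace Z] (ν : Measure Z) [IsFiniteMeasure ν] {p : ℝ≥0∞}
    (hp : 1 < p) (hp' : p ≠ ∞) {F : E3 → Z → ℝ≥0∞} (hF : Measurable (Function.uncurry F))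
    {K : ℝ≥0∞} (hK : ∀ᵐ z ∂ν, eLpNorm (fun x => F x z) p volume ≤ K)
    {f : E3 → ℝ} {B : ℝ≥0∞} (hf : ∀ x, ‖f x‖ₑ ≤ B * ∫⁻ z, F x z ∂ν) :
    eLpNorm f p volume ≤ B * (ν univ * K) := by
  have hp0 : p ≠ 0 := (zero_lt_one.trans hp).ne'
  have hpr : 1 < p.toReal := by
    rw [← ENNReal.toReal_one]; exact (ENNReal.toReal_lt_toReal (by simp) hp').2 hp
  set P := p.toReal with hP
  have hP0 : 0 < P := by linarith
  have key : ∫⁻ x, (∫⁻ z, F x z ∂ν) ^ P ≤ (ν univ * K) ^ P := by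
    calc ∫⁻ x, (∫⁻ z, F x z ∂ν) ^ P ≤ ∫⁻ x, (ν univ) ^ (P - 1) * ∫⁻ z, F x z ^ P ∂ν :=
          lintegral_mono fun x => lint_jensen ν hpr (hF.of_uncurry_left.aemeasurable)
      _ = (ν univ) ^ (P - 1) * ∫⁻ x, ∫⁻ z, F x z ^ P ∂ν := by
          rw [lintegral_const_mul]
          exact Measurable.lintegral_prod_right' (f := fun q => F q.1 q.2 ^ P) (hF.pow_const P)
      _ = (ν univ) ^ (P - 1) * ∫⁻ z, (∫⁻ x, F x z ^ P) ∂ν := by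
          rw [lintegral_lintegral_swap (μ := volume) (ν := ν) (f := fun x z => F x z ^ P)]
          exact (hF.pow_const P).aemeasurable
      _ ≤ (ν univ) ^ (P - 1) * ∫⁻ z, K ^ P ∂ν := by
          refine mul_le_mul_right ?_ _
          apply lintegral_mono_ae
          filter_upwards [hK] with z hz
          have := ENNReal.rpow_le_rpow hz hP0.le
          rw [eLpNorm_eq_lintegral_rpow_enorm_toReal hp0 hp', ← ENNReal.rpow_mul] at this
          rw [← hP, one_div_mul_cancel hP0.ne', ENNReal.rpow_one] at this
          simpa using this
      _ ≤ _ := by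
          rw [lintegral_const, ENNReal.mul_rpow_of_nonneg _ _ hP0.le, mul_comm (K ^ P), ← mul_assoc]
          gcongr ?_ * _
          by_cases h0 : ν univ = 0
          · simp [h0]
          nth_rewrite 2 [← ENNReal.rpow_one (ν univ)]
          rw [← ENNReal.rpow_add _ _ h0 (by simp)]
          simp
  rw [eLpNorm_eq_lintegral_rpow_enorm_toReal hp0 hp', ← hP]
  calc (∫⁻ x, ‖f x‖ₑ ^ P) ^ (1 / P) ≤ (∫⁻ x, B ^ P * (∫⁻ z, F x z ∂ν) ^ P) ^ (1 / P) := by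
        gcongr with x
        rw [← ENNReal.mul_rpow_of_nonneg _ _ hP0.le]
        exact ENNReal.rpow_le_rpow (hf x) hP0.le
    _ = (B ^ P * ∫⁻ x, (∫⁻ z, F x z ∂ν) ^ P) ^ (1 / P) := by
        rw [lintegral_const_mul]
        exact (Measurable.lintegral_prod_right' (f := fun q => F q.1 q.2) hF).pow_const P
    _ ≤ (B ^ P * (ν univ * K) ^ P) ^ (1 / P) := by gcongr
    _ = _ := by
        rw [← ENNReal.mul_rpow_of_nonneg _ _ hP0.le, ← ENNReal.rpow_mul,
          mul_one_div_cancel hP0.ne', ENNReal.rpow_one]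

/-! ### translations -/

lemma translate_eLpNorm (f : E3 → ℝ) (hf : AEStronglyMeasurable f) (p : ℝ≥0∞) (z : E3) :
    eLpNorm (fun x => f (x - z)) p volume = eLpNorm f p volume :=
  eLpNorm_comp_measurePreserving (p := p) hf (measurePreserving_sub_right volume z)

lemma translate_tendsto {f : E3 → ℝ} {p : ℝ≥0∞} [Fact (1 ≤ p)] (hp : p ≠ ∞) (hf : MemLp f p) :
    Tendsto (fun z : E3 => eLpNorm (fun x => f (x - z) - f x) p volume) (𝓝 0) (𝓝 0) := by
  let g : E3 → C(E3, E3) := fun z => ⟨fun x => x - z, by fun_prop⟩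
  have hg : Continuous g := by
    refine ContinuousMap.continuous_of_continuous_uncurry _ ?_
    simp only [g]
    change Continuous fun q : E3 × E3 => q.2 - q.1
    fun_prop
  have hgm : ∀ z, MeasurePreserving (g z) volume volume :=
    fun z => measurePreserving_sub_right volume z
  have H := (continuous_const (y := hf.toLp f) (X := E3)).compMeasurePreservingLp hg hgm hp
  have H2 := (H.tendsto 0)
  rw [Lp.tendsto_Lp_iff_tendsto_eLpNorm'] at H2
  refine H2.congr fun z => ?_
  apply eLpNorm_congr_ae
  have e1 : ∀ z, Lp.compMeasurePreserving (g z) (hgm z) (hf.toLp f) =ᵐ[volume]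
      fun x => f (x - z) := by
    intro z
    refine (Lp.coeFn_compMeasurePreserving _ (hgm z)).trans ?_
    exact (hgm z).quasiMeasurePreserving.ae_eq_comp hf.coeFn_toLp
  filter_upwards [e1 z, e1 0] with x h1 h2
  simp only [Pi.sub_apply, h1, h2, sub_zero]

lemma diffquot_smooth {v : E3 → ℝ} (hv : ContDiff ℝ 1 v) (s : E3) :
    eLpNorm (fun x => v (x - s) - v x) 2 volume ≤
      ‖s‖ₑ * ∑ i, eLpNorm (pd v i) 2 volume := by
  have hFm : Measurable (Function.uncurry fun (x : E3) (t : ℝ) => ‖fderiv ℝ v (x - t • s)‖ₑ) := by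
    have := hv.continuous_fderiv (by simp)
    apply Continuous.measurable
    fun_prop
  have := lemmaJ (p := 2) (volume.restrict (Icc (0:ℝ) 1)) (by simp) (by simp)
    (F := fun x t => ‖fderiv ℝ v (x - t • s)‖ₑ) hFm
    (K := ∑ i, eLpNorm (pd v i) 2 volume) (f := fun x => v (x - s) - v x) (B := ‖s‖ₑ) ?_ ?_
  · simpa using this
  · apply ae_of_all
    intro t
    calc eLpNorm (fun x => ‖fderiv ℝ v (x - t • s)‖ₑ) 2 volume
        ≤ eLpNorm (fun x => ∑ i, |pd v i (x - t • s)|) 2 volume := by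
          apply eLpNorm_mono_enorm
          intro x
          rw [enorm_enorm]
          have h2 : ‖fderiv ℝ v (x - t • s)‖ ≤ ‖∑ i, |pd v i (x - t • s)|‖ :=
            (fderiv_norm_le_sum_pd v _).trans (le_abs_self _)
          exact enorm_le_iff_norm_le.2 h2
      _ = eLpNorm (∑ i, fun x => |pd v i (x - t • s)|) 2 volume := by
          congr 1
      _ ≤ ∑ i, eLpNorm (fun x => |pd v i (x - t • s)|) 2 volume := by
          apply eLpNorm_sum_le
          · intro i _
            have := pd_continuous hv i
            exact Continuous.aestronglyMeasurable (by fun_prop)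
          norm_num
      _ = _ := by
          refine Finset.sum_congr rfl fun i _ => ?_
          rw [← translate_eLpNorm (pd v i) (pd_continuous hv i).aestronglyMeasurable 2 (t • s)]
          exact eLpNorm_norm (fun x => pd v i (x - t • s))
  · intro x
    have h1 : ∀ t : ℝ, HasDerivAt (fun t : ℝ => v (x - t • s)) (fderiv ℝ v (x - t • s) (-s)) t := by
      intro t
      have h2 : HasDerivAt (fun t : ℝ => x - t • s) (-s) t := by
        have := ((hasDerivAt_id t).smul_const s).const_sub x
        simpa using this
      exact ((hv.differentiable (by simp)) _).hasFDerivAt.comp_hasDerivAt t h2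
    have hc : Continuous fun t : ℝ => fderiv ℝ v (x - t • s) (-s) := by
      have := hv.continuous_fderiv (by simp)
      fun_prop
    have h3 := intervalIntegral.integral_eq_sub_of_hasDerivAt (a := 0) (b := 1)
      (fun t _ => h1 t) (hc.intervalIntegrable _ _)
    simp only [one_smul, zero_smul, sub_zero] at h3
    rw [← h3, intervalIntegral.integral_of_le zero_le_one, ← integral_Icc_eq_integral_Ioc]
    refine (enorm_integral_le_lintegral_enorm _).trans ?_
    rw [← lintegral_const_mul]
    · apply lintegral_mono
      intro t
      have := ContinuousLinearMap.le_opENorm (fderiv ℝ v (x - t • s)) (-s)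
      rw [enorm_neg] at this
      rw [mul_comm] at this; exact this
    · exact hFm.of_uncurry_left

lemma diffquot_weak {f : E3 → ℝ} {fn : ℕ → E3 → ℝ} (hf : MemLp f 6) (hfn : ∀ n, IsTest univ (fn n))
    (h6 : Tendsto (fun n => eLpNorm (fun x => fn n x - f x) 6 volume) atTop (𝓝 0))
    {K : ℝ≥0∞} (hK : ∀ᶠ n in atTop, ∑ i, eLpNorm (pd (fn n) i) 2 volume ≤ K) (s : E3) :
    eLpNorm (fun x => f (x - s) - f x) 2 volume ≤ ‖s‖ₑ * K := by
  have hm : ∀ n, AEStronglyMeasurable (fn n) volume :=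
    fun n => (hfn n).c1.continuous.aestronglyMeasurable
  have hms : ∀ n, AEStronglyMeasurable (fun x => fn n (x - s)) volume :=
    fun n => ((hfn n).c1.continuous.comp (continuous_sub_right s)).aestronglyMeasurable
  have hfs : AEStronglyMeasurable (fun x => f (x - s)) volume :=
    (hf.1.comp_measurePreserving (measurePreserving_sub_right volume s))
  refine eLpNorm_le_of_tendstoInMeasure (u := atTop)
    (f := fun n x => fn n (x - s) - fn n x) ?_ ?_ fun n => (hms n).sub (hm n)
  · filter_upwards [hK] with n hn
    exact (diffquot_smooth (hfn n).c1 s).trans (mul_le_mul_right hn _)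
  · refine tendstoInMeasure_of_tendsto_eLpNorm (p := 6) (by simp) (fun n => (hms n).sub (hm n))
      (hfs.sub hf.1) ?_
    refine tendsto_of_tendsto_of_tendsto_of_le_of_le tendsto_const_nhds
      (by simpa using h6.add h6) (fun _ => zero_le) fun n => ?_
    dsimp only
    have e : (fun n x => fn n (x - s) - fn n x) n - (fun x => f (x - s) - f x)
      = (fun x => fn n (x - s) - f (x - s)) - fun x => fn n x - f x := by
      ext x; simp; ring
    rw [e]
    refine (eLpNorm_sub_le ((hms n).sub hfs) ((hm n).sub hf.1) (by norm_num)).trans ?_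
    exact le_of_eq (congrArg₂ (· + ·)
      (translate_eLpNorm (fun x => fn n x - f x) ((hm n).sub hf.1) 6 s) rfl)

/-! ### kernels -/

lemma kernel_exists : ∃ M : ℝ, 0 < M ∧ ∀ ε : ℝ, 0 < ε → ∃ k : E3 → ℝ, IsTest univ k ∧
    (∫ y, k y = 1) ∧ (∀ y, |k y| ≤ M * (ε ^ 3)⁻¹) ∧ (∀ i y, |pd k i y| ≤ M * (ε ^ 3)⁻¹ * ε⁻¹) ∧
    (∀ y, ε < ‖y‖ → k y = 0) ∧ (∀ i y, ε < ‖y‖ → pd k i y = 0) := by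
  let b : ContDiffBump (0 : E3) := ⟨1 / 2, 1, by norm_num, by norm_num⟩
  let ψ : E3 → ℝ := b.normed volume
  have hψ : ContDiff ℝ ((⊤ : ℕ∞) : WithTop ℕ∞) ψ := b.contDiff_normed
  have hψ1 : ContDiff ℝ 1 ψ := hψ.of_le (le_inf_aux _)
  have hψc : HasCompactSupport ψ := b.hasCompactSupport_normed
  have hψi : ∫ y, ψ y = 1 := b.integral_normed
  have hψz : ∀ y, 1 < ‖y‖ → y ∉ tsupport ψ := by
    intro y hy h
    rw [b.tsupport_normed_eq] at h
    simp [b] at h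
    linarith
  obtain ⟨M1, hM1⟩ := hψ1.continuous.bounded_above_of_compact_support hψc
  obtain ⟨M2, hM2⟩ := (hψ1.continuous_fderiv (by simp)).bounded_above_of_compact_support
    (hψc.fderiv ℝ)
  have hM10 : 0 ≤ M1 := (norm_nonneg _).trans (hM1 0)
  have hM20 : 0 ≤ M2 := (norm_nonneg _).trans (hM2 0)
  refine ⟨M1 + M2 + 1, by positivity, fun ε hε => ?_⟩
  let k : E3 → ℝ := fun y => (ε ^ 3)⁻¹ * ψ (ε⁻¹ • y)
  have hk : ContDiff ℝ ((⊤ : ℕ∞) : WithTop ℕ∞) k :=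
    contDiff_const.mul (hψ.comp (contDiff_const_smul _))
  have hpd : ∀ i y, pd k i y = (ε ^ 3)⁻¹ * ε⁻¹ * pd ψ i (ε⁻¹ • y) := by
    intro i y
    have h1 : HasFDerivAt k ((ε ^ 3)⁻¹ • ((fderiv ℝ ψ (ε⁻¹ • y)).comp
        (ε⁻¹ • ContinuousLinearMap.id ℝ E3))) y := by
      have h2 : HasFDerivAt (fun y : E3 => ε⁻¹ • y) (ε⁻¹ • ContinuousLinearMap.id ℝ E3) y :=
        (hasFDerivAt_id y).const_smul ε⁻¹
      exact (((hψ1.differentiable (by simp)) _).hasFDerivAt.comp y h2).const_mul _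
    unfold pd
    rw [h1.fderiv]
    simp
    ring
  have hfar : ∀ y : E3, ε < ‖y‖ → ε⁻¹ • y ∉ tsupport ψ := by
    intro y hy
    apply hψz
    rw [norm_smul, norm_inv, Real.norm_of_nonneg hε.le, inv_mul_eq_div, one_lt_div hε]
    exact hy
  have hkz : ∀ y, ε < ‖y‖ → k y = 0 := by
    intro y hy
    simp only [k, image_eq_zero_of_notMem_tsupport (hfar y hy), mul_zero]
  refine ⟨k, ⟨hk, ?_, subset_univ _⟩, ?_, ?_, ?_, hkz, ?_⟩
  · apply HasCompactSupport.of_support_subset_isCompact (isCompact_closedBall (0:E3) ε)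
    intro y hy
    by_contra h
    simp at h
    exact hy (hkz y h)
  · simp only [k]
    rw [integral_const_mul, Measure.integral_comp_smul, hψi]
    simp
    rw [abs_of_pos hε]
    field_simp
  · intro y
    simp only [k, abs_mul]
    rw [abs_of_pos (by positivity : 0 < (ε^3)⁻¹), mul_comm]
    gcongr
    have := hM1 (ε⁻¹ • y)
    rw [Real.norm_eq_abs] at this
    linarith
  · intro i y
    rw [hpd, abs_mul, abs_of_pos (by positivity : 0 < (ε^3)⁻¹ * ε⁻¹), mul_comm, ← mul_assoc]
    gcongr
    have := (pd_abs_le ψ (ε⁻¹ • y) i).trans (hM2 (ε⁻¹ • y))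
    linarith
  · intro i y hy
    rw [hpd]
    have : fderiv ℝ ψ (ε⁻¹ • y) = 0 := image_eq_zero_of_notMem_tsupport
      fun h => hfar y hy (tsupport_fderiv_subset ℝ h)
    unfold pd
    rw [this]; simp


/-- volume of the unit ball -/
def c0 : ℝ≥0∞ := volume (closedBall (0 : E3) 1)

lemma c0_ne_top : c0 ≠ ∞ := (isCompact_closedBall (0:E3) 1).measure_lt_top.ne

lemma moll_bound {k : E3 → ℝ} {ε M β : ℝ} (hε : 0 < ε) (hM : 0 ≤ M) (hβ : 0 ≤ β)
    (hk : ∀ y, |k y| ≤ M * (ε ^ 3)⁻¹ * β) (hz : ∀ y, ε < ‖y‖ → k y = 0)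
    {p : ℝ≥0∞} (hp : 1 < p) (hp' : p ≠ ∞) {w : E3 → E3 → ℝ}
    (hw : Measurable (Function.uncurry w)) {K : ℝ≥0∞}
    (hK : ∀ z, ‖z‖ ≤ ε → eLpNorm (fun x => w x z) p volume ≤ K) {f : E3 → ℝ}
    (hf : ∀ x, f x = ∫ z, w x z * k z) :
    eLpNorm f p volume ≤ ENNReal.ofReal (M * β) * (c0 * K) := by
  set s : Set E3 := closedBall 0 ε
  have hs : volume s ≠ ∞ := (isCompact_closedBall (0:E3) ε).measure_lt_top.ne
  have : IsFiniteMeasure (volume.restrict s) := ⟨by simpa using hs.lt_top⟩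
  have H := lemmaJ (volume.restrict s) hp hp' (F := fun x z => ‖w x z‖ₑ) hw.enorm (K := K)
    (f := f) (B := ENNReal.ofReal (M * (ε ^ 3)⁻¹ * β)) ?_ ?_
  · refine H.trans (le_of_eq ?_)
    have hv : volume s = ENNReal.ofReal (ε ^ 3) * c0 := by
      have := Measure.addHaar_closedBall (volume : Measure E3) 0 hε.le
      simp only [finrank_euclideanSpace, Fintype.card_fin] at this
      rw [show volume s = _ from this, c0, Measure.addHaar_closedBall_eq_addHaar_ball]
    rw [Measure.restrict_apply_univ, hv]
    have : ENNReal.ofReal (M * β) = ENNReal.ofReal (M * (ε ^ 3)⁻¹ * β) * ENNReal.ofReal (ε ^ 3) := by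
      rw [← ENNReal.ofReal_mul (by positivity)]
      congr 1; field_simp
    rw [this]; ring
  · rw [ae_restrict_iff' measurableSet_closedBall]
    refine ae_of_all _ fun z hz => ?_
    have := hK z (by simpa [s] using hz)
    refine le_trans (eLpNorm_mono_enorm fun x => ?_) this
    rw [enorm_enorm]
  · intro x
    rw [hf]
    have e : ∫ z, w x z * k z = ∫ z in s, w x z * k z := by
      rw [setIntegral_eq_integral_of_forall_compl_eq_zero]
      intro z hzs
      rw [hz z (by simpa [s] using hzs), mul_zero]
    rw [e]
    refine (enorm_integral_le_lintegral_enorm _).trans ?_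
    rw [← lintegral_const_mul _ hw.of_uncurry_left.enorm]
    refine lintegral_mono fun z => ?_
    rw [enorm_mul, mul_comm]
    dsimp only
    gcongr
    rw [Real.enorm_eq_ofReal_abs]
    exact ENNReal.ofReal_le_ofReal (hk z)

lemma cv_alt (h k : E3 → ℝ) (x : E3) : cv h k x = ∫ z, h (x - z) * k z := by
  unfold cv
  rw [← integral_sub_left_eq_self _ volume x]
  simp

lemma cv_integrable' {h k : E3 → ℝ} (hh : LocallyIntegrable h) (hk : Continuous k)
    (hc : HasCompactSupport k) (x : E3) : Integrable (fun z => h (x - z) * k z) := by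
  have := (cv_integrable hh hk hc x).comp_sub_left x
  simpa using this

lemma int_pd_zero {k : E3 → ℝ} (hk : IsTest univ k) (i : Fin 3) : ∫ y, pd k i y = 0 := by
  have := pd_ibp hk.c1 (contDiff_const (c := (1:ℝ))) hk.2.1 i
  simp [pd] at this
  simpa [pd] using this

lemma moll_a (k : E3 → ℝ) {ε M β : ℝ} (hε : 0 < ε) (hM : 0 ≤ M) (hβ : 0 ≤ β)
    (hk : ∀ y, |k y| ≤ M * (ε ^ 3)⁻¹ * β) (hz : ∀ y, ε < ‖y‖ → k y = 0)
    {p : ℝ≥0∞} (hp : 1 < p) (hp' : p ≠ ∞) {h : E3 → ℝ} (hm : Measurable h) :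
    eLpNorm (cv h k) p volume ≤ ENNReal.ofReal (M * β) * (c0 * eLpNorm h p volume) := by
  refine moll_bound hε hM hβ hk hz hp hp' (w := fun x z => h (x - z)) ?_ ?_ (fun x => cv_alt h k x)
  · exact hm.comp (measurable_fst.sub measurable_snd)
  · intro z _
    rw [translate_eLpNorm h hm.aestronglyMeasurable]

/-- any test kernel: `cv` preserves `L^p` -/
lemma cv_memLp {k : E3 → ℝ} (hk : IsTest univ k) {p : ℝ≥0∞} (hp : 1 < p) (hp' : p ≠ ∞) {h : E3 → ℝ}
    (hm : Measurable h) (hh : MemLp h p) : MemLp (cv h k) p := by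
  have hl : LocallyIntegrable h := hh.locallyIntegrable hp.le
  have hc : Continuous (cv h k) :=
    (cv_contDiff (n := 1) hl hk.c1 hk.2.1).continuous
  refine ⟨hc.aestronglyMeasurable, ?_⟩
  obtain ⟨M, hM⟩ := hk.c1.continuous.bounded_above_of_compact_support hk.2.1
  have hM0 : 0 ≤ M := (norm_nonneg _).trans (hM 0)
  obtain ⟨R, hR⟩ := hk.2.1.isCompact.isBounded.subset_closedBall (0:E3)
  set ε := max R 1 with hεd
  have hε : 0 < ε := lt_of_lt_of_le one_pos (le_max_right _ _)
  refine lt_of_le_of_lt (moll_a k (ε := ε) (M := M) (β := ε ^ 3) hε hM0 (by positivity) ?_ ?_ hp hp' hm) ?_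
  · intro y
    have : M * (ε ^ 3)⁻¹ * ε ^ 3 = M := by field_simp
    rw [this]; exact hM y
  · intro y hy
    refine image_eq_zero_of_notMem_tsupport fun h => ?_
    have := hR h
    simp at this
    have := le_max_left R 1
    linarith
  · exact ENNReal.mul_lt_top ENNReal.ofReal_lt_top
      (ENNReal.mul_lt_top c0_ne_top.lt_top hh.2)

lemma moll_b (k : E3 → ℝ) (hkc : IsTest univ k) {ε M β : ℝ} (hε : 0 < ε) (hM : 0 ≤ M) (hβ : 0 ≤ β)
    (hk : ∀ y, |k y| ≤ M * (ε ^ 3)⁻¹ * β) (hz : ∀ y, ε < ‖y‖ → k y = 0)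
    {p : ℝ≥0∞} (hp : 1 < p) (hp' : p ≠ ∞) {h : E3 → ℝ} (hm : Measurable h) (hh : MemLp h p)
    {K : ℝ≥0∞} (hK : ∀ z, ‖z‖ ≤ ε → eLpNorm (fun x => h (x - z) - h x) p volume ≤ K) :
    eLpNorm (fun x => cv h k x - h x * ∫ y, k y) p volume ≤ ENNReal.ofReal (M * β) * (c0 * K) := by
  refine moll_bound hε hM hβ hk hz hp hp' (w := fun x z => h (x - z) - h x) ?_ hK ?_
  · exact (hm.comp (measurable_fst.sub measurable_snd)).sub (hm.comp measurable_fst)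
  · intro x
    simp only [sub_mul]
    rw [integral_sub (cv_integrable' (hh.locallyIntegrable hp.le) hkc.1.continuous hkc.2.1 x)
      ((hkc.1.continuous.integrable_of_hasCompactSupport hkc.2.1).const_mul _),
      integral_const_mul, cv_alt]

instance ht_6_2 : ENNReal.HolderTriple 6 2 (3/2) := ⟨by
  rw [← ENNReal.toReal_eq_toReal_iff' (by simp) (by simp)]
  rw [ENNReal.toReal_add (by simp) (by simp)]
  simp; norm_num⟩

lemma moll_d (k : E3 → ℝ) (hkc : IsTest univ k) {ε M : ℝ} (hε : 0 < ε) (hM : 0 ≤ M)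
    (hk : ∀ y, |k y| ≤ M * (ε ^ 3)⁻¹) (hz : ∀ y, ε < ‖y‖ → k y = 0)
    {ρ v : E3 → ℝ} (hρm : Measurable ρ) (hρ : MemLp ρ 6) (hvm : Measurable v)
    {K : ℝ≥0∞} (hK : ∀ z, eLpNorm (fun x => v (x - z) - v x) 2 volume ≤ ‖z‖ₑ * K)
    (hl : LocallyIntegrable fun x => ρ x * v x) :
    eLpNorm (fun x => cv (fun t => ρ t * v t) k x - cv ρ k x * v x) (3/2) volume
      ≤ ENNReal.ofReal M * (c0 * (eLpNorm ρ 6 volume * (ENNReal.ofReal ε * K))) := by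
  have h32 : (1:ℝ≥0∞) < 3/2 := by
    rw [ENNReal.lt_div_iff_mul_lt (by simp) (by simp)]; norm_num
  have h32' : (3/2 : ℝ≥0∞) ≠ ∞ := ENNReal.div_ne_top (by simp) (by simp)
  have := moll_bound (β := 1) hε hM zero_le_one (by simpa using hk) hz h32 h32'
    (w := fun x z => ρ (x - z) * (v (x - z) - v x))
    (f := fun x => cv (fun t => ρ t * v t) k x - cv ρ k x * v x)
    (K := eLpNorm ρ 6 volume * (ENNReal.ofReal ε * K)) ?_ ?_ ?_
  · simpa using this
  · exact (hρm.comp (measurable_fst.sub measurable_snd)).mul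
      ((hvm.comp (measurable_fst.sub measurable_snd)).sub (hvm.comp measurable_fst))
  · intro z hz
    have hvs : Measurable fun x => v (x - z) := hvm.comp (measurable_sub_const z)
    have hρs : Measurable fun x => ρ (x - z) := hρm.comp (measurable_sub_const z)
    have := eLpNorm_smul_le_mul_eLpNorm (p := 6) (q := 2) (r := 3/2) (μ := volume)
      (f := fun x => v (x - z) - v x) (φ := fun x => ρ (x - z))
      (hvs.sub hvm).aestronglyMeasurable hρs.aestronglyMeasurable
    refine this.trans ?_
    rw [translate_eLpNorm ρ hρm.aestronglyMeasurable]
    gcongr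
    refine (hK z).trans ?_
    gcongr
    rw [← ofReal_norm]
    exact ENNReal.ofReal_le_ofReal hz
  · intro x
    have i1 := cv_integrable' hl hkc.1.continuous hkc.2.1 x
    have i2 := (cv_integrable' (hρ.locallyIntegrable (by norm_num)) hkc.1.continuous hkc.2.1 x).mul_const (v x)
    rw [cv_alt, cv_alt, ← integral_mul_const, ← integral_sub i1 i2]
    congr 1; ext z; ring


instance ht_6_6_3 : ENNReal.HolderTriple 6 6 3 := ⟨by
  rw [← ENNReal.toReal_eq_toReal_iff' (by simp) (by simp), ENNReal.toReal_add (by simp) (by simp)]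
  simp; norm_num⟩
instance ht_6_3_2 : ENNReal.HolderTriple 6 3 2 := ⟨by
  rw [← ENNReal.toReal_eq_toReal_iff' (by simp) (by simp), ENNReal.toReal_add (by simp) (by simp)]
  simp; norm_num⟩
instance ht_3_32_1 : ENNReal.HolderTriple 3 (3/2) 1 := ⟨by
  rw [← ENNReal.toReal_eq_toReal_iff' (by simp) (by simp), ENNReal.toReal_add (by simp) (by simp)]
  simp; norm_num⟩
instance ht_32_3_1 : ENNReal.HolderTriple (3/2) 3 1 := ⟨by
  rw [← ENNReal.toReal_eq_toReal_iff' (by simp) (by simp), ENNReal.toReal_add (by simp) (by simp)]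
  simp; norm_num⟩
instance ht_2_6_32 : ENNReal.HolderTriple 2 6 (3/2) := ⟨by
  rw [← ENNReal.toReal_eq_toReal_iff' (by simp) (by simp), ENNReal.toReal_add (by simp) (by simp)]
  simp; norm_num⟩
instance ht_32_6_65 : ENNReal.HolderTriple (3/2) 6 (6/5) := ⟨by
  rw [← ENNReal.toReal_eq_toReal_iff' (by simp) (by simp), ENNReal.toReal_add (by simp) (by simp)]
  simp; norm_num⟩
instance ht_6_65_1 : ENNReal.HolderTriple 6 (6/5) 1 := ⟨by
  rw [← ENNReal.toReal_eq_toReal_iff' (by simp) (by simp), ENNReal.toReal_add (by simp) (by simp)]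
  simp; norm_num⟩
instance ht_65_6_1 : ENNReal.HolderTriple (6/5) 6 1 := ⟨by
  rw [← ENNReal.toReal_eq_toReal_iff' (by simp) (by simp), ENNReal.toReal_add (by simp) (by simp)]
  simp; norm_num⟩

lemma memLp_mulA {p q r : ℝ≥0∞} [ENNReal.HolderTriple p q r] {f g : E3 → ℝ}
    (hf : MemLp f p) (hg : MemLp g q) : MemLp (fun x => f x * g x) r :=
  MemLp.mul (p := p) (q := q) (r := r) hg hf

lemma memLp_bd {p : ℝ≥0∞} {f g : E3 → ℝ} {C : ℝ} (hg : MemLp g p)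
    (hf : AEStronglyMeasurable f) (h : ∀ x, |f x| ≤ C * |g x|) : MemLp f p :=
  MemLp.of_le_mul hg hf (ae_of_all _ h)

lemma integrable_mulA {p q : ℝ≥0∞} [ENNReal.HolderTriple p q 1] {f g : E3 → ℝ}
    (hf : MemLp f p) (hg : MemLp g q) : Integrable (fun x => f x * g x) :=
  memLp_one_iff_integrable.1 (memLp_mulA hf hg)

/-- primitive vanishing at zero -/
def prim (a : ℝ → ℝ) (s : ℝ) : ℝ := ∫ t in (0:ℝ)..s, a t

lemma prim_hasDerivAt {a : ℝ → ℝ} (ha : Continuous a) (s : ℝ) : HasDerivAt (prim a) (a s) s :=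
  intervalIntegral.integral_hasDerivAt_right (ha.intervalIntegrable _ _)
    (ha.stronglyMeasurableAtFilter _ _) ha.continuousAt

lemma prim_contDiff {a : ℝ → ℝ} (ha : Continuous a) : ContDiff ℝ 1 (prim a) := by
  rw [contDiff_one_iff_deriv]
  refine ⟨fun s => (prim_hasDerivAt ha s).differentiableAt, ?_⟩
  have : deriv (prim a) = a := funext fun s => (prim_hasDerivAt ha s).deriv
  rw [this]; exact ha

lemma prim_sub_le {a : ℝ → ℝ} (ha : Continuous a) {B : ℝ} (s t : ℝ)
    (hB : ∀ τ, |τ| ≤ |s| + |t| → |a τ| ≤ B) : |prim a s - prim a t| ≤ B * |s - t| := by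
  unfold prim
  rw [intervalIntegral.integral_interval_sub_left (ha.intervalIntegrable _ _)
    (ha.intervalIntegrable _ _)]
  refine intervalIntegral.norm_integral_le_of_norm_le_const (f := a) (C := B)
    fun τ hτ => hB τ ?_
  rw [uIoc_eq_union] at hτ
  rcases hτ with h | h
  · rw [abs_le]
    constructor
    · linarith [neg_abs_le t, abs_nonneg s, h.1]
    · linarith [le_abs_self s, abs_nonneg t, h.2]
  · rw [abs_le]
    constructor
    · linarith [neg_abs_le s, abs_nonneg t, h.1]
    · linarith [le_abs_self t, abs_nonneg s, h.2]

lemma prim_le {a : ℝ → ℝ} (ha : Continuous a) {B : ℝ} (s : ℝ)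
    (hB : ∀ τ, |τ| ≤ |s| → |a τ| ≤ B) : |prim a s| ≤ B * |s| := by
  have := prim_sub_le ha s 0 (B := B) (by simpa using hB)
  simpa [prim] using this

lemma pd_comp {r : E3 → ℝ} {h h' : ℝ → ℝ} (hh : ∀ s, HasDerivAt h (h' s) s) (hr : ContDiff ℝ 1 r)
    (i : Fin 3) (x : E3) : pd (fun y => h (r y)) i x = h' (r x) * pd r i x := by
  have := (hh (r x)).comp_hasFDerivAt x ((hr.differentiable (by simp)) x).hasFDerivAt
  unfold pd
  rw [show (fun y => h (r y)) = h ∘ r from rfl, this.fderiv]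
  simp

lemma pd_ibp_int {f g : E3 → ℝ} (hf : ContDiff ℝ 1 f) (hg : ContDiff ℝ 1 g) (i : Fin 3)
    (h1 : Integrable fun x => pd f i x * g x) (h2 : Integrable fun x => f x * pd g i x)
    (h3 : Integrable fun x => f x * g x) :
    ∫ x, f x * pd g i x = - ∫ x, pd f i x * g x :=
  integral_mul_fderiv_eq_neg_fderiv_mul_of_integrable h1 h2 h3
    (fun x _ => hf.differentiable (by simp) x) (fun x _ => hg.differentiable (by simp) x)

lemma fixedEps {a : ℝ → ℝ} {C : ℝ} (ha : Continuous a) (hC : 0 ≤ C) (h1 : ∀ s, |a s| ≤ C * |s|)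
    (h3 : ∀ s, |a s| ≤ C * |s| ^ 3) {r : E3 → ℝ} (hr : ContDiff ℝ 1 r) (hr6 : MemLp r 6)
    (hpr : ∀ i, MemLp (pd r i) 6) {m : Fin 3 → E3 → ℝ} (hm : ∀ i, ContDiff ℝ 1 (m i))
    (hm3 : ∀ i, MemLp (m i) 3) (hpm : ∀ i, MemLp (pd (m i) i) 3)
    (hdiv : ∀ x, ∑ i, pd (m i) i x = 0)
    {v dv : Fin 3 → E3 → ℝ} {vn : Fin 3 → ℕ → E3 → ℝ} (hv : ∀ i, MemLp (v i) 6)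
    (hdv : ∀ i, MemLp (dv i) 2) (hvn : ∀ i n, IsTest univ (vn i n))
    (hv6 : ∀ i, Tendsto (fun n => eLpNorm (fun x => vn i n x - v i x) 6 volume) atTop (𝓝 0))
    (hv2 : ∀ i, Tendsto (fun n => eLpNorm (fun x => pd (vn i n) i x - dv i x) 2 volume)
      atTop (𝓝 0)) :
    ∑ i, ∫ x, (m i x - r x * v i x) * (a (r x) * pd r i x)
      = ∑ i, ∫ x, prim (fun t => t * a t) (r x) * dv i x := by
  have har : AEStronglyMeasurable (fun x => a (r x)) :=
    (ha.comp hr.continuous).aestronglyMeasurable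
  have hr3 : MemLp (fun x => r x * (r x * r x)) 2 :=
    memLp_mulA (p := 6) (q := 3) hr6 (memLp_mulA (p := 6) (q := 6) hr6 hr6)
  have hr4 : MemLp (fun x => (r x * (r x * r x)) * r x) (3/2) :=
    memLp_mulA (p := 2) (q := 6) hr3 hr6
  have ha2 : MemLp (fun x => a (r x)) 2 := by
    refine memLp_bd (C := C) hr3 har fun x => (h3 _).trans (le_of_eq ?_)
    rw [abs_mul, abs_mul]; ring
  have hap : ∀ i, MemLp (fun x => a (r x) * pd r i x) (3/2) := fun i =>
    memLp_mulA (p := 2) (q := 6) ha2 (hpr i)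
  have hra : MemLp (fun x => r x * a (r x)) (3/2) := by
    refine memLp_bd (C := C) hr4 (hr.continuous.aestronglyMeasurable.mul har) fun x => ?_
    have := mul_le_mul_of_nonneg_left (h3 (r x)) (abs_nonneg (r x))
    rw [abs_mul, abs_mul, abs_mul, abs_mul]
    refine this.trans (le_of_eq (by ring))
  have hrap : ∀ i, MemLp (fun x => (r x * a (r x)) * pd r i x) (6/5) := fun i =>
    memLp_mulA (p := 3/2) (q := 6) hra (hpr i)
  have hta : Continuous fun t => t * a t := continuous_id.mul ha
  have hhc : ContDiff ℝ 1 fun x => prim a (r x) := (prim_contDiff ha).comp hr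
  have hHc : ContDiff ℝ 1 fun x => prim (fun t => t * a t) (r x) := (prim_contDiff hta).comp hr
  have hh : MemLp (fun x => prim a (r x)) (3/2) := by
    refine memLp_bd (C := C) hr4 hhc.continuous.aestronglyMeasurable fun x => ?_
    refine (prim_le ha (r x) (B := C * |r x| ^ 3) ?_).trans (le_of_eq ?_)
    · intro τ hτ
      refine (h3 τ).trans ?_
      gcongr
    · rw [abs_mul, abs_mul, abs_mul]; ring
  have hH : MemLp (fun x => prim (fun t => t * a t) (r x)) 2 := by
    refine memLp_bd (C := C) hr3 hHc.continuous.aestronglyMeasurable fun x => ?_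
    refine (prim_le hta (r x) (B := C * |r x| ^ 2) ?_).trans (le_of_eq ?_)
    · intro τ hτ
      rw [abs_mul]
      have := h1 τ
      calc |τ| * |a τ| ≤ |r x| * (C * |r x|) := by
            gcongr
            exact this.trans (by gcongr)
        _ = _ := by ring
    · rw [abs_mul, abs_mul]; ring
  -- the mass term
  have S1 : ∑ i, ∫ x, m i x * (a (r x) * pd r i x) = 0 := by
    have e : ∀ i, ∫ x, m i x * (a (r x) * pd r i x) = - ∫ x, pd (m i) i x * prim a (r x) := by
      intro i
      have e1 : ∀ x, pd (fun x => prim a (r x)) i x = a (r x) * pd r i x :=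
        fun x => pd_comp (prim_hasDerivAt ha) hr i x
      have := pd_ibp_int (hm i) hhc i (integrable_mulA (hpm i) hh)
        (by simp only [e1]; exact integrable_mulA (hm3 i) (hap i)) (integrable_mulA (hm3 i) hh)
      simpa only [e1] using this
    simp only [e]
    rw [Finset.sum_neg_distrib, ← integral_finsetSum _ fun i _ => integrable_mulA (hpm i) hh]
    simp only [← Finset.sum_mul, hdiv]
    simp
  have S2 : ∀ i, ∫ x, v i x * ((r x * a (r x)) * pd r i x)
      = - ∫ x, prim (fun t => t * a t) (r x) * dv i x := by
    intro i
    have e1 : ∀ x, pd (fun x => prim (fun t => t * a t) (r x)) i x = (r x * a (r x)) * pd r i x :=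
      fun x => pd_comp (prim_hasDerivAt hta) hr i x
    have e2 : ∀ n, ∫ x, vn i n x * ((r x * a (r x)) * pd r i x)
        = - ∫ x, prim (fun t => t * a t) (r x) * pd (vn i n) i x := by
      intro n
      have := pd_ibp (hvn i n).c1 hHc (hvn i n).2.1 i
      simp only [e1] at this
      rw [this]
      congr 1; congr 1; ext x; ring
    have T1 : Tendsto (fun n => ∫ x, vn i n x * ((r x * a (r x)) * pd r i x)) atTop
        (𝓝 (∫ x, v i x * ((r x * a (r x)) * pd r i x))) :=
      aux_tendsto_int_mul (p := 6) (q := 6/5) (hv i) (hrap i) (fun n => (hvn i n).memLp 6)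
        (fun n => hrap i) (hv6 i) (by simp)
    have T2 : Tendsto (fun n => ∫ x, prim (fun t => t * a t) (r x) * pd (vn i n) i x) atTop
        (𝓝 (∫ x, prim (fun t => t * a t) (r x) * dv i x)) :=
      aux_tendsto_int_mul (p := 2) (q := 2) hH (hdv i) (fun n => hH)
        (fun n => ((hvn i n).pd i).memLp 2) (by simp) (hv2 i)
    simp only [e2] at T1
    exact tendsto_nhds_unique T1 T2.neg
  have S3 : ∀ i, ∫ x, (m i x - r x * v i x) * (a (r x) * pd r i x)
      = (∫ x, m i x * (a (r x) * pd r i x)) + ∫ x, prim (fun t => t * a t) (r x) * dv i x := by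
    intro i
    have := S2 i
    rw [← neg_eq_iff_eq_neg] at this
    rw [← this, ← sub_eq_add_neg, ← integral_sub (integrable_mulA (hm3 i) (hap i))
      (integrable_mulA (p := 6) (q := 6/5) (hv i) (hrap i))]
    congr 1; ext x; ring
  simp only [S3, Finset.sum_add_distrib, S1, zero_add]


lemma pd_reflect {k : E3 → ℝ} (hk : ContDiff ℝ 1 k) (x : E3) (i : Fin 3) (t : E3) :
    pd (fun y => k (x - y)) i t = - pd k i (x - t) := by
  have h1 : HasFDerivAt (fun y : E3 => x - y) (-ContinuousLinearMap.id ℝ E3) t :=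
    (hasFDerivAt_id t).const_sub x
  have := ((hk.differentiable (by simp)) (x - t)).hasFDerivAt.comp t h1
  unfold pd
  rw [show (fun y => k (x - y)) = k ∘ fun y => x - y from rfl, this.fderiv]
  simp

lemma isTest_reflect {k : E3 → ℝ} (hk : IsTest univ k) (x : E3) :
    IsTest univ fun y => k (x - y) :=
  ⟨hk.1.comp (contDiff_const.sub contDiff_id),
    hk.2.1.comp_homeomorph (Homeomorph.subLeft x), subset_univ _⟩

lemma eLpNorm_mulA {p q r : ℝ≥0∞} [ENNReal.HolderTriple p q r] {f g : E3 → ℝ}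
    (hf : AEStronglyMeasurable f) (hg : AEStronglyMeasurable g) :
    eLpNorm (fun x => f x * g x) r volume ≤ eLpNorm f p volume * eLpNorm g q volume := by
  have := eLpNorm_smul_le_mul_eLpNorm (p := p) (q := q) (r := r) (μ := volume) (f := g) (φ := f)
    hg hf
  refine le_trans (le_of_eq ?_) this
  congr 1

set_option maxHeartbeats 1600000 in
lemma renormN {a : ℝ → ℝ} {C : ℝ} (ha : Continuous a) (hC : 0 ≤ C) (h1 : ∀ s, |a s| ≤ C * |s|)
    (h3 : ∀ s, |a s| ≤ C * |s| ^ 3) {ρ : E3 → ℝ} (hρm : Measurable ρ) (hρ6 : MemLp ρ 6)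
    {v dv : Fin 3 → E3 → ℝ} {vn : Fin 3 → ℕ → E3 → ℝ} (hvm : ∀ i, Measurable (v i))
    (hv : ∀ i, MemLp (v i) 6)
    (hdv : ∀ i, MemLp (dv i) 2) (hvn : ∀ i n, IsTest univ (vn i n))
    (hv6 : ∀ i, Tendsto (fun n => eLpNorm (fun x => vn i n x - v i x) 6 volume) atTop (𝓝 0))
    (hv2 : ∀ i, Tendsto (fun n => eLpNorm (fun x => pd (vn i n) i x - dv i x) 2 volume)
      atTop (𝓝 0))
    {K : ℝ≥0∞} (hKt : K ≠ ∞)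
    (hK : ∀ i, ∀ᶠ n in atTop, ∑ j, eLpNorm (pd (vn i n) j) 2 volume ≤ K)
    (mass : ∀ φ, IsTest univ φ → ∑ i, ∫ x, (ρ x * v i x) * pd φ i x = 0) :
    ∑ i, ∫ x, prim (fun t => t * a t) (ρ x) * dv i x = 0 := by
  obtain ⟨M, hM, hker⟩ := kernel_exists
  have : Fact (1 ≤ (6:ℝ≥0∞)) := ⟨by norm_num⟩
  have h6 : (1:ℝ≥0∞) < 6 := by norm_num
  have h3lt : (1:ℝ≥0∞) < 3 := by norm_num
  have htr := translate_tendsto (p := 6) (by simp) hρ6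
  -- choose the scales
  have hsc : ∀ n : ℕ, ∃ ε : ℝ, 0 < ε ∧ ∀ z : E3, ‖z‖ ≤ ε →
      eLpNorm (fun x => ρ (x - z) - ρ x) 6 volume ≤ ENNReal.ofReal (1 / ((n:ℝ) + 1)) := by
    intro n
    have h0 : (0:ℝ≥0∞) < ENNReal.ofReal (1 / ((n:ℝ) + 1)) := ENNReal.ofReal_pos.2 (by positivity)
    have := htr.eventually (gt_mem_nhds h0)
    rw [Metric.eventually_nhds_iff] at this
    obtain ⟨δ, hδ, h⟩ := this
    refine ⟨δ / 2, by positivity, fun z hz => (h ?_).le⟩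
    rw [dist_zero_right]; linarith
  choose ε hε hεb using hsc
  choose k hk hk1 hkb hkpb hkz hkpz using fun n => hker (ε n) (hε n)
  set δ : ℕ → ℝ≥0∞ := fun n => ENNReal.ofReal (1 / ((n:ℝ) + 1)) with hδ
  have hδ0 : Tendsto δ atTop (𝓝 0) := by
    have := ENNReal.tendsto_ofReal tendsto_one_div_add_atTop_nhds_zero_nat
    rw [ENNReal.ofReal_zero] at this
    exact this
  have hρl : LocallyIntegrable ρ := hρ6.locallyIntegrable (by norm_num)
  have hρv : ∀ i, MemLp (fun x => ρ x * v i x) 3 := fun i =>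
    memLp_mulA (p := 6) (q := 6) hρ6 (hv i)
  have hρvm : ∀ i, Measurable (fun x => ρ x * v i x) := fun i => hρm.mul (hvm i)
  have hρvl : ∀ i, LocallyIntegrable fun x => ρ x * v i x :=
    fun i => (hρv i).locallyIntegrable (by norm_num)
  set r : ℕ → E3 → ℝ := fun n => cv ρ (k n) with hr
  set m : ℕ → Fin 3 → E3 → ℝ := fun n i => cv (fun x => ρ x * v i x) (k n) with hmd
  have hrc : ∀ n, ContDiff ℝ 1 (r n) := fun n => cv_contDiff (n := 1) hρl (hk n).c1 (hk n).2.1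
  have hpr : ∀ n i, pd (r n) i = cv ρ (pd (k n) i) := fun n i => cv_pd hρl (hk n).c1 (hk n).2.1 i
  have hpm : ∀ n i, pd (m n i) i = cv (fun x => ρ x * v i x) (pd (k n) i) :=
    fun n i => cv_pd (hρvl i) (hk n).c1 (hk n).2.1 i
  have hr6 : ∀ n, MemLp (r n) 6 := fun n => cv_memLp (hk n) h6 (by simp) hρm hρ6
  have hpr6 : ∀ n i, MemLp (pd (r n) i) 6 := fun n i => by
    rw [hpr]; exact cv_memLp ((hk n).pd i) h6 (by simp) hρm hρ6
  have hm3 : ∀ n i, MemLp (m n i) 3 := fun n i => cv_memLp (hk n) h3lt (by simp) (hρvm i) (hρv i)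
  have hmc : ∀ n i, ContDiff ℝ 1 (m n i) := fun n i =>
    cv_contDiff (n := 1) (hρvl i) (hk n).c1 (hk n).2.1
  have FE : ∀ n, ∑ i, ∫ x, (m n i x - r n x * v i x) * (a (r n x) * pd (r n) i x)
      = ∑ i, ∫ x, prim (fun t => t * a t) (r n x) * dv i x := by
    intro n
    refine fixedEps ha hC h1 h3 (hrc n) (hr6 n) (hpr6 n) (hmc n) (hm3 n) ?_ ?_ hv hdv hvn hv6 hv2
    · intro i
      rw [hpm]; exact cv_memLp ((hk n).pd i) h3lt (by simp) (hρvm i) (hρv i)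
    · intro x
      have := mass _ (isTest_reflect (hk n) x)
      simp only [pd_reflect (hk n).c1, mul_neg, integral_neg, Finset.sum_neg_distrib,
        neg_eq_zero] at this
      simp only [hpm]
      exact this
  -- quantitative bounds
  set L : ℝ≥0∞ := eLpNorm ρ 6 volume with hL
  have hLt : L ≠ ∞ := hρ6.2.ne
  have b1 : ∀ n, eLpNorm (r n) 6 volume ≤ ENNReal.ofReal M * (c0 * L) := by
    intro n
    have := moll_a (k n) (β := 1) (hε n) hM.le zero_le_one (by simpa using hkb n) (hkz n) h6
      (by simp) hρm
    simpa using this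
  have b2 : ∀ n, eLpNorm (fun x => r n x - ρ x) 6 volume ≤ ENNReal.ofReal M * (c0 * δ n) := by
    intro n
    have := moll_b (k n) (hk n) (β := 1) (hε n) hM.le zero_le_one (by simpa using hkb n) (hkz n) h6
      (by simp) hρm hρ6 (hεb n)
    simp only [hk1 n, mul_one] at this
    exact this
  have b3 : ∀ n i, eLpNorm (pd (r n) i) 6 volume
      ≤ ENNReal.ofReal (M * (ε n)⁻¹) * (c0 * δ n) := by
    intro n i
    have := moll_b (pd (k n) i) ((hk n).pd i) (β := (ε n)⁻¹) (hε n) hM.le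
      (inv_nonneg.2 (hε n).le) (hkpb n i) (hkpz n i) h6
      (by simp) hρm hρ6 (hεb n)
    rw [hpr]
    simp only [int_pd_zero (hk n) i, mul_zero, sub_zero] at this
    exact this
  have b4 : ∀ n i, eLpNorm (fun x => m n i x - r n x * v i x) (3/2) volume
      ≤ ENNReal.ofReal M * (c0 * (L * (ENNReal.ofReal (ε n) * K))) := fun n i =>
    moll_d (k n) (hk n) (hε n) hM.le (hkb n) (hkz n) hρm hρ6 (hvm i)
      (diffquot_weak (hv i) (hvn i) (hv6 i) (hK i)) (hρvl i)
  have b5 : ∀ n, eLpNorm (fun x => a (r n x)) 6 volume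
      ≤ ENNReal.ofReal C * (ENNReal.ofReal M * (c0 * L)) := by
    intro n
    have := eLpNorm_le_mul_eLpNorm_of_ae_le_mul (μ := volume) (f := fun x => a (r n x)) (g := r n)
      (c := C) (ae_of_all _ fun x => h1 (r n x)) 6
    exact this.trans (mul_le_mul_right (b1 n) _)
  set Q : ℝ≥0∞ := (ENNReal.ofReal M * (c0 * (L * K))) *
    ((ENNReal.ofReal C * (ENNReal.ofReal M * (c0 * L))) * (ENNReal.ofReal M * c0)) with hQ
  have hQt : Q ≠ ∞ := by
    have := c0_ne_top
    simp only [hQ]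
    finiteness
  have E : ∀ n i, ‖∫ x, (m n i x - r n x * v i x) * (a (r n x) * pd (r n) i x)‖ₑ ≤ Q * δ n := by
    intro n i
    have ms1 : AEStronglyMeasurable (fun x => a (r n x)) volume :=
      (ha.comp (hrc n).continuous).aestronglyMeasurable
    have ms2 : AEStronglyMeasurable (pd (r n) i) volume :=
      (pd_continuous (hrc n) i).aestronglyMeasurable
    have ms3 : AEStronglyMeasurable (fun x => m n i x - r n x * v i x) volume :=
      (hm3 n i).1.sub ((hr6 n).1.mul (hv i).1)
    have i1 : eLpNorm (fun x => a (r n x) * pd (r n) i x) 3 volume ≤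
        eLpNorm (fun x => a (r n x)) 6 volume * eLpNorm (pd (r n) i) 6 volume :=
      eLpNorm_mulA ms1 ms2
    have i2 : eLpNorm (fun x => (m n i x - r n x * v i x) * (a (r n x) * pd (r n) i x)) 1 volume
      ≤ eLpNorm (fun x => m n i x - r n x * v i x) (3/2) volume *
        eLpNorm (fun x => a (r n x) * pd (r n) i x) 3 volume := eLpNorm_mulA ms3 (ms1.mul ms2)
    refine (enorm_integral_le_lintegral_enorm _).trans ?_
    rw [← eLpNorm_one_eq_lintegral_enorm]
    refine i2.trans ((mul_le_mul' (b4 n i) (i1.trans (mul_le_mul' (b5 n) (b3 n i)))).trans ?_)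
    apply le_of_eq
    have : ENNReal.ofReal (ε n) * ENNReal.ofReal (M * (ε n)⁻¹) = ENNReal.ofReal M := by
      rw [← ENNReal.ofReal_mul (hε n).le]
      congr 1
      have := (hε n).ne'
      field_simp
    rw [hQ, ← this]
    have e2 : ENNReal.ofReal M = ENNReal.ofReal (ε n) * ENNReal.ofReal (M * (ε n)⁻¹) := this.symm
    ring
  have T1 : Tendsto (fun n => ∑ i, ∫ x, (m n i x - r n x * v i x) * (a (r n x) * pd (r n) i x))
      atTop (𝓝 0) := by
    rw [show (0:ℝ) = ∑ i : Fin 3, 0 by simp]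
    refine tendsto_finsetSum _ fun i _ => ?_
    rw [tendsto_zero_iff_enorm_tendsto_zero]
    refine tendsto_of_tendsto_of_tendsto_of_le_of_le tendsto_const_nhds ?_ (fun _ => zero_le)
      fun n => E n i
    have := ENNReal.Tendsto.const_mul hδ0 (Or.inr hQt)
    simpa using this
  have hta : Continuous fun t => t * a t := continuous_id.mul ha
  have hHb : ∀ s t, |prim (fun t => t * a t) s - prim (fun t => t * a t) t|
      ≤ C * |((|s| + |t|) * (|s| + |t|)) * (s - t)| := by
    intro s t
    refine (prim_sub_le hta s t (B := C * (|s| + |t|) ^ 2) ?_).trans (le_of_eq ?_)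
    · intro τ hτ
      rw [abs_mul]
      calc |τ| * |a τ| ≤ (|s| + |t|) * (C * (|s| + |t|)) := by
            gcongr
            exact (h1 τ).trans (by gcongr)
        _ = _ := by ring
    · rw [abs_mul, abs_mul, abs_of_nonneg (by positivity : 0 ≤ |s| + |t|)]; ring
  have hHc : Continuous (prim fun t => t * a t) := (prim_contDiff hta).continuous
  have hHm : ∀ {f : E3 → ℝ}, MemLp f 6 → MemLp (fun x => prim (fun t => t * a t) (f x)) 2 := by
    intro f hf
    refine memLp_bd (C := C) (g := fun x => f x * (f x * f x))
      (memLp_mulA (p := 6) (q := 3) hf (memLp_mulA (p := 6) (q := 6) hf hf))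
      (hHc.comp_aestronglyMeasurable hf.1) fun x => ?_
    have := hHb (f x) 0
    simp only [prim, intervalIntegral.integral_same, sub_zero, abs_zero, add_zero, abs_mul,
      abs_abs] at this ⊢
    refine this.trans (le_of_eq (by ring))
  have T2 : Tendsto (fun n => ∑ i, ∫ x, prim (fun t => t * a t) (r n x) * dv i x) atTop
      (𝓝 (∑ i, ∫ x, prim (fun t => t * a t) (ρ x) * dv i x)) := by
    refine tendsto_finsetSum _ fun i _ => ?_
    refine aux_tendsto_int_mul (p := 2) (q := 2) (hHm hρ6) (hdv i) (fun n => hHm (hr6 n))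
      (fun n => hdv i) ?_ (by simp)
    set W : ℝ≥0∞ := ENNReal.ofReal M * (c0 * L) + L with hW
    have hWt : W ≠ ∞ := by
      have := c0_ne_top
      simp only [hW]; finiteness
    have bd : ∀ n, eLpNorm (fun x => prim (fun t => t * a t) (r n x) -
        prim (fun t => t * a t) (ρ x)) 2 volume ≤
        (ENNReal.ofReal C * ((W * W) * (ENNReal.ofReal M * c0))) * δ n := by
      intro n
      have ms : AEStronglyMeasurable (fun x => |r n x| + |ρ x|) volume :=
        (hr6 n).1.norm.add hρ6.1.norm
      have b6 : eLpNorm (fun x => |r n x| + |ρ x|) 6 volume ≤ W := by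
        refine (eLpNorm_add_le (hr6 n).1.norm hρ6.1.norm (by norm_num)).trans ?_
        refine add_le_add ?_ ?_
        · rw [eLpNorm_norm]; exact b1 n
        · rw [eLpNorm_norm]
      have i1 : eLpNorm (fun x => (|r n x| + |ρ x|) * (|r n x| + |ρ x|)) 3 volume ≤
          eLpNorm (fun x => |r n x| + |ρ x|) 6 volume * eLpNorm (fun x => |r n x| + |ρ x|) 6 volume :=
        eLpNorm_mulA ms ms
      have i2 : eLpNorm (fun x => (r n x - ρ x) * ((|r n x| + |ρ x|) * (|r n x| + |ρ x|))) 2 volume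
          ≤ eLpNorm (fun x => r n x - ρ x) 6 volume *
            eLpNorm (fun x => (|r n x| + |ρ x|) * (|r n x| + |ρ x|)) 3 volume :=
        eLpNorm_mulA ((hr6 n).1.sub hρ6.1) (ms.mul ms)
      have i3 := eLpNorm_le_mul_eLpNorm_of_ae_le_mul (μ := volume)
        (f := fun x => prim (fun t => t * a t) (r n x) - prim (fun t => t * a t) (ρ x))
        (g := fun x => (r n x - ρ x) * ((|r n x| + |ρ x|) * (|r n x| + |ρ x|)))
        (c := C) (ae_of_all _ fun x => by
          have := hHb (r n x) (ρ x)
          rw [mul_comm (_ * _) (r n x - ρ x)] at this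
          exact this) 2
      refine i3.trans ((mul_le_mul_right (i2.trans (mul_le_mul' (b2 n)
        (i1.trans (mul_le_mul' b6 b6)))) _).trans (le_of_eq ?_))
      ring
    refine tendsto_of_tendsto_of_tendsto_of_le_of_le tendsto_const_nhds ?_ (fun _ => zero_le) bd
    have hx : ENNReal.ofReal C * ((W * W) * (ENNReal.ofReal M * c0)) ≠ ∞ := by
      have := c0_ne_top
      finiteness
    have := ENNReal.Tendsto.const_mul hδ0 (Or.inr hx)
    simpa using this
  simp only [FE] at T1
  exact tendsto_nhds_unique T2 T1


/-- truncated second derivative -/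
def trA (γ N : ℝ) (s : ℝ) : ℝ := γ * (min (max s 0) N) ^ (γ - 2)

lemma trA_cont {γ N : ℝ} (hγ : 6 ≤ γ) : Continuous (trA γ N) := by
  unfold trA
  refine continuous_const.mul (Continuous.rpow_const (by fun_prop) fun x => Or.inr (by linarith))

lemma trA_bound {γ N : ℝ} (hγ : 6 ≤ γ) (hN : 1 ≤ N) (j : ℕ) (hj0 : j ≤ 3) (s : ℝ) :
    |trA γ N s| ≤ γ * N ^ (γ - 2) * |s| ^ j := by
  unfold trA
  set b := min (max s 0) N with hb
  have hb0 : 0 ≤ b := le_min (le_max_right _ _) (by linarith)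
  have hbN : b ≤ N := min_le_right _ _
  have hbs : b ≤ |s| := (min_le_left _ _).trans (max_le (le_abs_self s) (abs_nonneg s))
  have hj : (j:ℝ) ≤ 3 := by exact_mod_cast hj0
  have e : b ^ (γ - 2) = b ^ j * b ^ (γ - 2 - j) := by
    rw [← Real.rpow_natCast b j, ← Real.rpow_add_of_nonneg hb0 (by positivity) (by linarith)]
    congr 1; ring
  have h2 : b ^ (γ - 2 - j) ≤ N ^ (γ - 2) :=
    (Real.rpow_le_rpow hb0 hbN (by linarith)).trans
      (Real.rpow_le_rpow_of_exponent_le hN (by linarith [(Nat.cast_nonneg j : (0:ℝ) ≤ j)]))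
  rw [abs_of_nonneg (by positivity), e]
  calc γ * (b ^ j * b ^ (γ - 2 - j)) ≤ γ * (|s| ^ j * N ^ (γ - 2)) := by gcongr
    _ = _ := by ring

lemma int_pow_gamma {γ : ℝ} (hγ : 6 ≤ γ) (s : ℝ) : 
    ∫ t in (0:ℝ)..s, γ * t ^ (γ - 1) = s ^ γ := by
  rw [intervalIntegral.integral_const_mul, integral_rpow (Or.inl (by linarith)),
    Real.zero_rpow (by linarith)]
  have : γ ≠ 0 := by linarith
  simp
  field_simp

lemma trA_mul {γ N t : ℝ} (hγ : 6 ≤ γ) (ht : 0 ≤ t) (htN : t ≤ N) :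
    t * trA γ N t = γ * t ^ (γ - 1) := by
  unfold trA
  rw [max_eq_left ht, min_eq_left htN]
  have : t ^ (γ - 1) = t * t ^ (γ - 2) := by
    nth_rewrite 2 [← Real.rpow_one t]
    rw [← Real.rpow_add_of_nonneg ht (by linarith) (by linarith)]
    congr 1; ring
  rw [this]; ring

lemma trA_mul_le {γ N t : ℝ} (hγ : 6 ≤ γ) (hN : 0 ≤ N) (ht : 0 ≤ t) :
    t * trA γ N t ≤ γ * t ^ (γ - 1) := by
  rw [← trA_mul hγ ht le_rfl]
  unfold trA
  rw [max_eq_left ht, min_self]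
  have : 0 ≤ min t N := le_min ht hN
  gcongr
  · linarith
  · exact min_le_left _ _

lemma trH_eq {γ N s : ℝ} (hγ : 6 ≤ γ) (hs : 0 ≤ s) (hsN : s ≤ N) :
    prim (fun t => t * trA γ N t) s = s ^ γ := by
  rw [← int_pow_gamma hγ s]
  unfold prim
  apply intervalIntegral.integral_congr
  intro t ht
  rw [uIcc_of_le hs] at ht
  exact trA_mul hγ ht.1 (ht.2.trans hsN)

lemma trH_bound {γ N s : ℝ} (hγ : 6 ≤ γ) (hN : 0 ≤ N) (hs : 0 ≤ s) :
    |prim (fun t => t * trA γ N t) s| ≤ s ^ γ := by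
  have hc : Continuous fun t => t * trA γ N t := continuous_id.mul (trA_cont hγ)
  rw [abs_of_nonneg]
  · rw [← int_pow_gamma hγ s]
    unfold prim
    refine intervalIntegral.integral_mono_on hs (hc.intervalIntegrable _ _) ?_ ?_
    · refine Continuous.intervalIntegrable ?_ _ _
      exact continuous_const.mul (Continuous.rpow_const continuous_id fun x => Or.inr (by linarith))
    · intro t ht
      exact trA_mul_le hγ hN ht.1
  · unfold prim
    refine intervalIntegral.integral_nonneg hs fun t ht => ?_
    have h1 := ht.1
    unfold trA
    have : 0 ≤ min (max t 0) N := le_min (le_max_right _ _) hN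
    positivity

lemma renorm {γ : ℝ} (hγ : 6 ≤ γ) {ρ : E3 → ℝ} (hρm : Measurable ρ) (hρ6 : MemLp ρ 6)
    (hρ0 : ∀ x, 0 ≤ ρ x) (hργ : MemLp (fun x => ρ x ^ γ) 2)
    {v dv : Fin 3 → E3 → ℝ} {vn : Fin 3 → ℕ → E3 → ℝ} (hvm : ∀ i, Measurable (v i))
    (hv : ∀ i, MemLp (v i) 6)
    (hdv : ∀ i, MemLp (dv i) 2) (hvn : ∀ i n, IsTest univ (vn i n))
    (hv6 : ∀ i, Tendsto (fun n => eLpNorm (fun x => vn i n x - v i x) 6 volume) atTop (𝓝 0))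
    (hv2 : ∀ i, Tendsto (fun n => eLpNorm (fun x => pd (vn i n) i x - dv i x) 2 volume)
      atTop (𝓝 0))
    {K : ℝ≥0∞} (hKt : K ≠ ∞)
    (hK : ∀ i, ∀ᶠ n in atTop, ∑ j, eLpNorm (pd (vn i n) j) 2 volume ≤ K)
    (mass : ∀ φ, IsTest univ φ → ∑ i, ∫ x, (ρ x * v i x) * pd φ i x = 0) :
    ∑ i, ∫ x, ρ x ^ γ * dv i x = 0 := by
  have hN1 : ∀ n : ℕ, (1:ℝ) ≤ (n:ℝ) + 1 := fun n => by linarith [(Nat.cast_nonneg n : (0:ℝ) ≤ n)]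
  have Z : ∀ n : ℕ, ∑ i, ∫ x, prim (fun t => t * trA γ ((n:ℝ) + 1) t) (ρ x) * dv i x = 0 := by
    intro n
    refine renormN (C := γ * ((n:ℝ) + 1) ^ (γ - 2)) (trA_cont hγ) (by positivity) ?_ ?_ hρm hρ6
      hvm hv hdv hvn hv6 hv2 hKt hK mass
    · intro s
      simpa using trA_bound hγ (hN1 n) 1 (by norm_num) s
    · exact trA_bound hγ (hN1 n) 3 (by norm_num)
  have T : Tendsto (fun n : ℕ => ∑ i, ∫ x, prim (fun t => t * trA γ ((n:ℝ) + 1) t) (ρ x) * dv i x)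
      atTop (𝓝 (∑ i, ∫ x, ρ x ^ γ * dv i x)) := by
    refine tendsto_finsetSum _ fun i _ => ?_
    refine tendsto_integral_of_dominated_convergence (fun x => ‖ρ x ^ γ * dv i x‖) ?_
      (integrable_mulA (p := 2) (q := 2) hργ (hdv i)).norm ?_ ?_
    · intro n
      have hta : Continuous fun t => t * trA γ ((n:ℝ) + 1) t := continuous_id.mul (trA_cont hγ)
      exact ((prim_contDiff hta).continuous.comp_aestronglyMeasurable hρ6.1).mul (hdv i).1
    · intro n
      refine ae_of_all _ fun x => ?_
      rw [norm_mul, norm_mul]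
      gcongr
      rw [Real.norm_eq_abs, Real.norm_eq_abs]
      exact (trH_bound hγ (by linarith [hN1 n]) (hρ0 x)).trans (le_abs_self _)
    · refine ae_of_all _ fun x => ?_
      apply tendsto_const_nhds.congr'
      obtain ⟨n0, hn0⟩ := exists_nat_ge (ρ x)
      filter_upwards [eventually_ge_atTop n0] with n hn
      rw [trH_eq hγ (hρ0 x)]
      have : (n0:ℝ) ≤ n := by exact_mod_cast hn
      linarith
  simp only [Z] at T
  exact tendsto_nhds_unique T tendsto_const_nhds |>.symm ▸ rfl


instance ht_3_6_2 : ENNReal.HolderTriple 3 6 2 := ⟨by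
  rw [← ENNReal.toReal_eq_toReal_iff' (by simp) (by simp), ENNReal.toReal_add (by simp) (by simp)]
  simp; norm_num⟩

lemma ht_ofReal {a b c : ℝ} (ha : 0 < a) (hb : 0 < b) (hc : 0 < c) (h : a⁻¹ + b⁻¹ = c⁻¹) :
    ENNReal.HolderTriple (ENNReal.ofReal a) (ENNReal.ofReal b) (ENNReal.ofReal c) := ⟨by
  rw [← ENNReal.ofReal_inv_of_pos ha, ← ENNReal.ofReal_inv_of_pos hb,
    ← ENNReal.ofReal_inv_of_pos hc, ← ENNReal.ofReal_add (by positivity) (by positivity), h]⟩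

lemma memLp_interp {f : E3 → ℝ} {r γ : ℝ} (h6r : 6 ≤ r) (hrγ : r ≤ γ) (hf6 : MemLp f 6)
    (hfγ : MemLp f (ENNReal.ofReal γ)) : MemLp f (ENNReal.ofReal r) := by
  have hr0 : 0 < r := by linarith
  have hγ0 : 0 < γ := by linarith
  have i1 : Integrable fun x => ‖f x‖ ^ (6:ℝ) := by
    have := (integrable_norm_rpow_iff hf6.1 (by simp) (by simp)).2 hf6
    simpa using this
  have i2 : Integrable fun x => ‖f x‖ ^ γ := by
    have := (integrable_norm_rpow_iff hfγ.1 (by simpa using hγ0) (by simp)).2 hfγ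
    simpa [ENNReal.toReal_ofReal hγ0.le] using this
  rw [← integrable_norm_rpow_iff hf6.1 (by simpa using hr0) (by simp),
    ENNReal.toReal_ofReal hr0.le]
  refine (i1.add i2).mono' ?_ (ae_of_all _ fun x => ?_)
  · exact (hf6.1.norm.aemeasurable.pow_const r).aestronglyMeasurable
  · have h0 := norm_nonneg (f x)
    rw [Real.norm_of_nonneg (by positivity)]
    simp only [Pi.add_apply]
    rcases le_total ‖f x‖ 1 with h | h
    · rcases h0.eq_or_lt with h' | h'
      · rw [← h', Real.zero_rpow hr0.ne', Real.zero_rpow (by norm_num), Real.zero_rpow hγ0.ne']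
        simp
      · have := Real.rpow_le_rpow_of_exponent_ge h' h h6r
        have : 0 ≤ ‖f x‖ ^ γ := by positivity
        linarith
    · have := Real.rpow_le_rpow_of_exponent_le h hrγ
      have : 0 ≤ ‖f x‖ ^ (6:ℝ) := by positivity
      linarith

lemma core_alg (μ η : ℝ) (d : Fin 3 → Fin 3 → ℝ) :
    ∑ i, ∑ j, Smat μ η d i j * d i j = μ * (∑ i, ∑ j, d i j * d i j)
      + μ * (∑ i, ∑ j, d i j * d j i) + (η - 2 / 3 * μ) * (∑ i, ∑ j, d i i * d j j) := by
  simp only [Smat, Fin.sum_univ_three]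
  simp
  ring

lemma core_alg_nonneg (d : Fin 3 → Fin 3 → ℝ) : 0 ≤ ∑ i, ∑ j, d i i * d j j := by
  rw [← Finset.sum_mul_sum]
  exact mul_self_nonneg _

/-- energy identity implies vanishing -/
lemma vanish_of_energy {μ η : ℝ} (hμ : 0 < μ) (hη : 0 ≤ η)
    {v : Fin 3 → E3 → ℝ} {d : Fin 3 → Fin 3 → E3 → ℝ} {vn : Fin 3 → ℕ → E3 → ℝ}
    (hv : ∀ i, MemLp (v i) 6) (hd : ∀ i j, MemLp (d i j) 2) (hvn : ∀ i n, IsTest univ (vn i n))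
    (hv6 : ∀ i, Tendsto (fun n => eLpNorm (fun x => vn i n x - v i x) 6 volume) atTop (𝓝 0))
    (hv2 : ∀ i j, Tendsto (fun n => eLpNorm (fun x => pd (vn i n) j x - d i j x) 2 volume)
      atTop (𝓝 0))
    (hE : ∑ i, ∑ j, ∫ x, Smat μ η (fun a b => d a b x) i j * d i j x = 0)
    (hS : ∀ i j, MemLp (fun x => Smat μ η (fun a b => d a b x) i j) 2) (i : Fin 3) :
    v i =ᵐ[volume] 0 := by
  have ii : ∀ a b a' b', Integrable fun x => d a b x * d a' b' x := fun a b a' b' =>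
    integrable_mulA (p := 2) (q := 2) (hd a b) (hd a' b')
  have hsw : ∀ i j, ∫ x, d i j x * d j i x = ∫ x, d i i x * d j j x := by
    intro i j
    have T1 : Tendsto (fun n => ∫ x, pd (vn i n) j x * pd (vn j n) i x) atTop
        (𝓝 (∫ x, d i j x * d j i x)) :=
      aux_tendsto_int_mul (p := 2) (q := 2) (hd i j) (hd j i)
        (fun n => ((hvn i n).pd j).memLp 2) (fun n => ((hvn j n).pd i).memLp 2) (hv2 i j) (hv2 j i)
    have T2 : Tendsto (fun n => ∫ x, pd (vn i n) i x * pd (vn j n) j x) atTop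
        (𝓝 (∫ x, d i i x * d j j x)) :=
      aux_tendsto_int_mul (p := 2) (q := 2) (hd i i) (hd j j)
        (fun n => ((hvn i n).pd i).memLp 2) (fun n => ((hvn j n).pd j).memLp 2) (hv2 i i) (hv2 j j)
    have e : ∀ n, ∫ x, pd (vn i n) j x * pd (vn j n) i x = ∫ x, pd (vn i n) i x * pd (vn j n) j x :=
      fun n => pd_swap (hvn i n).c1 (hvn j n).c2 (hvn i n).2.1 i j
    simp only [e] at T1
    exact tendsto_nhds_unique T1 T2
  have hsum : ∀ F : Fin 3 → Fin 3 → E3 → ℝ, (∀ i j, Integrable (F i j)) →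
      ∫ x, ∑ i, ∑ j, F i j x = ∑ i, ∑ j, ∫ x, F i j x := by
    intro F hF
    rw [integral_finsetSum _ fun i _ => integrable_finsetSum _ fun j _ => hF i j]
    refine Finset.sum_congr rfl fun i _ => integral_finsetSum _ fun j _ => hF i j
  have hIntF : ∀ F : Fin 3 → Fin 3 → E3 → ℝ, (∀ i j, Integrable (F i j)) →
      Integrable fun x => ∑ i, ∑ j, F i j x := fun F hF =>
    integrable_finsetSum _ fun i _ => integrable_finsetSum _ fun j _ => hF i j
  rw [← hsum _ fun i j => integrable_mulA (p := 2) (q := 2) (hS i j) (hd i j)] at hE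
  have e0 : ∀ x, ∑ i, ∑ j, Smat μ η (fun a b => d a b x) i j * d i j x = _ :=
    fun x => core_alg μ η (fun a b => d a b x)
  simp only [e0] at hE
  have j1 := hIntF (fun i j x => d i j x * d i j x) fun i j => ii i j i j
  have j2 := hIntF (fun i j x => d i j x * d j i x) fun i j => ii i j j i
  have j3 := hIntF (fun i j x => d i i x * d j j x) fun i j => ii i i j j
  have j12 : Integrable (fun x => μ * (∑ i, ∑ j, d i j x * d i j x)
      + μ * (∑ i, ∑ j, d i j x * d j i x)) := (j1.const_mul μ).add (j2.const_mul μ)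
  rw [integral_add j12 (j3.const_mul _),
    integral_add (j1.const_mul _) (j2.const_mul _), integral_const_mul, integral_const_mul,
    integral_const_mul, hsum _ fun i j => ii i j i j, hsum _ fun i j => ii i j j i] at hE
  simp only [hsw] at hE
  rw [← hsum _ fun i j => ii i i j j] at hE
  have hD : 0 ≤ ∫ x, ∑ i, ∑ j, d i i x * d j j x :=
    integral_nonneg fun x => core_alg_nonneg (fun a b => d a b x)
  have hsq : ∀ i j, 0 ≤ ∫ x, d i j x * d i j x := fun i j =>
    integral_nonneg fun x => mul_self_nonneg _
  have hsum0 : ∑ i, ∑ j, ∫ x, d i j x * d i j x = 0 := by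
    have h0 : 0 ≤ ∑ i, ∑ j, ∫ x, d i j x * d i j x :=
      Finset.sum_nonneg fun i _ => Finset.sum_nonneg fun j _ => hsq i j
    have : μ * (∑ i, ∑ j, ∫ x, d i j x * d i j x) ≤ 0 := by
      have : 0 ≤ (μ / 3 + η) * ∫ x, ∑ i, ∑ j, d i i x * d j j x := by positivity
      linarith
    nlinarith
  have hd0 : ∀ i j, d i j =ᵐ[volume] 0 := by
    intro i j
    rw [Finset.sum_eq_zero_iff_of_nonneg fun i _ => Finset.sum_nonneg fun j _ => hsq i j] at hsum0
    have h1 := hsum0 i (Finset.mem_univ _)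
    rw [Finset.sum_eq_zero_iff_of_nonneg fun j _ => hsq i j] at h1
    have h2 := h1 j (Finset.mem_univ _)
    rw [integral_eq_zero_iff_of_nonneg (fun x => mul_self_nonneg _) (ii i j i j)] at h2
    filter_upwards [h2] with x hx
    simpa using hx
  obtain ⟨C, hC⟩ := gns_E3
  have hg : ∀ j, Tendsto (fun n => eLpNorm (pd (vn i n) j) 2 volume) atTop (𝓝 0) := by
    intro j
    refine (hv2 i j).congr fun n => eLpNorm_congr_ae ?_
    filter_upwards [hd0 i j] with x hx
    simp [hx]
  have hvn0 : Tendsto (fun n => eLpNorm (vn i n) 6 volume) atTop (𝓝 0) := by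
    refine tendsto_of_tendsto_of_tendsto_of_le_of_le tendsto_const_nhds ?_ (fun _ => zero_le)
      fun n => hC (vn i n) (hvn i n).c1 (hvn i n).2.1
    have := tendsto_finsetSum Finset.univ fun j _ => hg j
    have := ENNReal.Tendsto.const_mul (a := (C:ℝ≥0∞)) this (Or.inr (by simp))
    simpa using this
  have hz : eLpNorm (v i) 6 volume = 0 := by
    have T := hvn0.add (hv6 i)
    rw [add_zero] at T
    refine le_antisymm (ge_of_tendsto' T fun n => ?_) zero_le
    have hm := (hvn i n).c1.continuous.aestronglyMeasurable (μ := volume)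
    have e : v i = vn i n - fun x => vn i n x - v i x := by ext x; simp
    nth_rewrite 1 [e]
    exact eLpNorm_sub_le hm (hm.sub (hv i).1) (by norm_num)
  rwa [eLpNorm_eq_zero_iff (hv i).1 (by simp)] at hz


lemma ofReal_six : ENNReal.ofReal 6 = 6 := by simp
lemma ofReal_sixfive : ENNReal.ofReal (6/5) = 6/5 := by
  rw [ENNReal.ofReal_div_of_pos (by norm_num)]; simp

lemma IsTest.mul {f g : E3 → ℝ} (hf : IsTest univ f) (hg : IsTest univ g) :
    IsTest univ (fun x => f x * g x) :=
  ⟨hf.1.mul hg.1, hf.2.1.mul_right, subset_univ _⟩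

lemma core {μ η γ q : ℝ} (hμ : 0 < μ) (hη : 0 ≤ η) (hγ : 6 ≤ γ)
    (hq1 : 6 * γ / (5 * γ - 6) ≤ q) (hq2 : q ≤ 3 / 2)
    {ρ : E3 → ℝ} (hρm : Measurable ρ) (hρ0 : ∀ x, 0 ≤ ρ x) (hρ6 : MemLp ρ 6)
    (hργ : MemLp ρ (ENNReal.ofReal γ))
    {v : Fin 3 → E3 → ℝ} {d : Fin 3 → Fin 3 → E3 → ℝ} {vn : Fin 3 → ℕ → E3 → ℝ}
    (hvm : ∀ i, Measurable (v i))
    (hv : ∀ i, MemLp (v i) 6) (hd : ∀ i j, MemLp (d i j) 2) (hvn : ∀ i n, IsTest univ (vn i n))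
    (hv6 : ∀ i, Tendsto (fun n => eLpNorm (fun x => vn i n x - v i x) 6 volume) atTop (𝓝 0))
    (hv2 : ∀ i j, Tendsto (fun n => eLpNorm (fun x => pd (vn i n) j x - d i j x) 2 volume)
      atTop (𝓝 0))
    {g : Fin 3 → E3 → ℝ} (hg : ∀ i, MemLp (g i) (ENNReal.ofReal q))
    {Gn : ℕ → E3 → ℝ} (hGn : ∀ n, IsTest univ (Gn n))
    (hGq : ∀ i, Tendsto (fun n => eLpNorm (fun x => pd (Gn n) i x - g i x) (ENNReal.ofReal q)
      volume) atTop (𝓝 0))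
    (mass : ∀ φ, IsTest univ φ → ∫ x, ρ x * (∑ i, v i x * pd φ i x) = 0)
    (momentum : ∀ φ : Fin 3 → E3 → ℝ, (∀ i, IsTest univ (φ i)) →
      ∫ x, ((∑ i, ∑ j, ρ x * v i x * v j x * pd (φ i) j x)
        + ρ x ^ γ * (∑ i, pd (φ i) i x))
      = (∫ x, ∑ i, ∑ j, Smat μ η (fun a b => d a b x) i j * pd (φ i) j x)
        - ∫ x, ∑ i, ρ x * g i x * φ i x) (i : Fin 3) :
    v i =ᵐ[volume] 0 := by
  have hγ0 : 0 < γ := by linarith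
  have hq65 : 6 / 5 < q := by
    refine lt_of_lt_of_le ?_ hq1
    rw [div_lt_div_iff₀ (by norm_num) (by linarith)]; linarith
  have hq0 : 0 < q := by linarith
  have hqi : q⁻¹ ≤ 5 / 6 - γ⁻¹ := by
    have : 5 / 6 - γ⁻¹ = (6 * γ / (5 * γ - 6))⁻¹ := by
      have : 5 * γ - 6 ≠ 0 := by intro h; linarith
      field_simp
    rw [this]
    have h5 : 0 < 5 * γ - 6 := by linarith
    gcongr
  have hqi2 : 2 / 3 ≤ q⁻¹ := by
    have : (2:ℝ) / 3 = (3 / 2)⁻¹ := by norm_num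
    rw [this]; gcongr
  have hγi : 0 < γ⁻¹ := by positivity
  have hrpos : 0 < 5 / 6 - q⁻¹ := by linarith
  have hq'pos : 0 < 1 - q⁻¹ := by linarith
  set r : ℝ := (5 / 6 - q⁻¹)⁻¹ with hr
  set q' : ℝ := (1 - q⁻¹)⁻¹ with hq'
  have hr0 : 0 < r := by positivity
  have hq'0 : 0 < q' := by positivity
  have h6r : 6 ≤ r := by
    rw [hr, le_inv_comm₀ (by norm_num) hrpos]; linarith
  have hrγ : r ≤ γ := by
    rw [hr, inv_le_comm₀ hrpos hγ0]; linarith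
  have H1 : ENNReal.HolderTriple (ENNReal.ofReal r) (ENNReal.ofReal q) (6/5) := by
    rw [← ofReal_sixfive]
    exact ht_ofReal hr0 hq0 (by norm_num) (by rw [hr, inv_inv]; ring)
  have H2 : ENNReal.HolderTriple (ENNReal.ofReal r) 6 (ENNReal.ofReal q') := by
    rw [← ofReal_six]
    exact ht_ofReal hr0 (by norm_num) hq'0 (by rw [hr, hq', inv_inv, inv_inv]; ring)
  have H3 : ENNReal.HolderTriple (ENNReal.ofReal q') (ENNReal.ofReal q) 1 := by
    rw [← ENNReal.ofReal_one]
    exact ht_ofReal hq'0 hq0 (by norm_num) (by rw [hq', inv_inv]; ring)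
  have hρr : MemLp ρ (ENNReal.ofReal r) := memLp_interp h6r hrγ hρ6 hργ
  -- basic memberships
  have mρv : ∀ i, MemLp (fun x => ρ x * v i x) 3 := fun i =>
    memLp_mulA (p := 6) (q := 6) hρ6 (hv i)
  have mρvq : ∀ i, MemLp (fun x => ρ x * v i x) (ENNReal.ofReal q') := fun i =>
    memLp_mulA hρr (hv i)
  have mT : ∀ i j, MemLp (fun x => ρ x * v i x * v j x) 2 := fun i j =>
    memLp_mulA (p := 3) (q := 6) (mρv i) (hv j)
  have mF : ∀ i, MemLp (fun x => ρ x * g i x) (6/5) := fun i => memLp_mulA hρr (hg i)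
  have mp1 : MemLp (fun x => ρ x ^ γ) 1 := by
    rw [memLp_one_iff_integrable]
    have := (integrable_norm_rpow_iff hργ.1 (by simpa using hγ0) (by simp)).2 hργ
    simpa [ENNReal.toReal_ofReal hγ0.le, abs_of_nonneg (hρ0 _)] using this
  have mS : ∀ i j, MemLp (fun x => Smat μ η (fun a b => d a b x) i j) 2 := by
    intro i j
    have ht : MemLp (fun x => ∑ k, d k k x) 2 := memLp_finsetSum _ fun k _ => hd k k
    have := ((((hd i j).add (hd j i)).sub ((ht.const_mul (2/3)).mul_const
      (if i = j then (1:ℝ) else 0))).const_mul μ).add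
      ((ht.const_mul η).mul_const (if i = j then (1:ℝ) else 0))
    exact this
  have massS : ∀ φ, IsTest univ φ → ∑ i, ∫ x, (ρ x * v i x) * pd φ i x = 0 := by
    intro φ hφ
    rw [← mass φ hφ, ← integral_finsetSum _ fun i _ =>
      integrable_mulA (p := 3) (q := 3/2) (mρv i) ((hφ.pd i).memLp _)]
    refine integral_congr_ae (ae_of_all _ fun x => ?_)
    simp only [Finset.mul_sum, mul_assoc]
  have hsum : ∀ F : Fin 3 → Fin 3 → E3 → ℝ, (∀ i j, Integrable (F i j)) →
      ∫ x, ∑ i, ∑ j, F i j x = ∑ i, ∑ j, ∫ x, F i j x := by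
    intro F hF
    rw [integral_finsetSum _ fun i _ => integrable_finsetSum _ fun j _ => hF i j]
    refine Finset.sum_congr rfl fun i _ => integral_finsetSum _ fun j _ => hF i j
  have momS : ∀ φ : Fin 3 → E3 → ℝ, (∀ i, IsTest univ (φ i)) →
      (∑ i, ∑ j, ∫ x, ρ x * v i x * v j x * pd (φ i) j x) + ∑ i, ∫ x, ρ x ^ γ * pd (φ i) i x
      = (∑ i, ∑ j, ∫ x, Smat μ η (fun a b => d a b x) i j * pd (φ i) j x)
        - ∑ i, ∫ x, ρ x * g i x * φ i x := by
    intro φ hφ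
    have i1 : ∀ i j, Integrable fun x => ρ x * v i x * v j x * pd (φ i) j x := fun i j =>
      integrable_mulA (p := 2) (q := 2) (mT i j) (((hφ i).pd j).memLp _)
    have i2 : ∀ i, Integrable fun x => ρ x ^ γ * pd (φ i) i x := fun i =>
      integrable_mulA (p := 1) (q := ∞) mp1 (((hφ i).pd i).memLp _)
    have i3 : ∀ i j, Integrable fun x => Smat μ η (fun a b => d a b x) i j * pd (φ i) j x :=
      fun i j => integrable_mulA (p := 2) (q := 2) (mS i j) (((hφ i).pd j).memLp _)
    have i4 : ∀ i, Integrable fun x => ρ x * g i x * φ i x := fun i =>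
      integrable_mulA (p := 6/5) (q := 6) (mF i) ((hφ i).memLp _)
    have := momentum φ hφ
    simp only [Finset.mul_sum] at this
    rw [integral_add (integrable_finsetSum _ fun i _ => integrable_finsetSum _ fun j _ => i1 i j)
      (integrable_finsetSum _ fun i _ => i2 i), hsum _ i1, hsum _ i3,
      integral_finsetSum _ fun i _ => i2 i, integral_finsetSum _ fun i _ => i4 i] at this
    exact this
  -- pressure
  have mp2 : MemLp (fun x => ρ x ^ γ) 2 := by
    refine pressure_L2' (r := 6/5) mp1
      (A := fun i j x => Smat μ η (fun a b => d a b x) i j - ρ x * v i x * v j x)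
      (f := fun i x => - (ρ x * g i x)) (fun i j => (mS i j).sub (mT i j)) (fun i => (mF i).neg) ?_
    intro w hw
    have := momS (fun i => pd w i) fun i => hw.pd i
    have e1 : ∫ x, ρ x ^ γ * lap w x = ∑ i, ∫ x, ρ x ^ γ * pd (pd w i) i x := by
      rw [← integral_finsetSum _ fun i _ =>
        integrable_mulA (p := 1) (q := ∞) mp1 (((hw.pd i).pd i).memLp _)]
      refine integral_congr_ae (ae_of_all _ fun x => ?_)
      simp only [lap, Finset.mul_sum]
    have e2 : ∀ i j, ∫ x, (Smat μ η (fun a b => d a b x) i j - ρ x * v i x * v j x)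
        * pd (pd w i) j x = (∫ x, Smat μ η (fun a b => d a b x) i j * pd (pd w i) j x)
        - ∫ x, ρ x * v i x * v j x * pd (pd w i) j x := by
      intro i j
      simp only [sub_mul]
      exact integral_sub (integrable_mulA (p := 2) (q := 2) (mS i j) (((hw.pd i).pd j).memLp _))
        (integrable_mulA (p := 2) (q := 2) (mT i j) (((hw.pd i).pd j).memLp _))
    rw [e1]
    simp only [e2, neg_mul, integral_neg, Finset.sum_sub_distrib, Finset.sum_neg_distrib]
    linarith
  -- energy
  have hEn : (∑ i, ∑ j, ∫ x, ρ x * v i x * v j x * d i j x) + ∑ i, ∫ x, ρ x ^ γ * d i i x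
      = (∑ i, ∑ j, ∫ x, Smat μ η (fun a b => d a b x) i j * d i j x)
        - ∑ i, ∫ x, ρ x * g i x * v i x := by
    have z : ∀ (f : E3 → ℝ) (p : ℝ≥0∞), Tendsto (fun _ : ℕ => eLpNorm (fun x => f x - f x) p volume)
        atTop (𝓝 0) := by
      intro f p; simp
    have t1 : Tendsto (fun n => ∑ i, ∑ j, ∫ x, ρ x * v i x * v j x * pd (vn i n) j x) atTop
        (𝓝 (∑ i, ∑ j, ∫ x, ρ x * v i x * v j x * d i j x)) :=
      tendsto_finsetSum _ fun i _ => tendsto_finsetSum _ fun j _ =>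
        aux_tendsto_int_mul (p := 2) (q := 2) (mT i j) (hd i j) (fun _ => mT i j)
          (fun n => ((hvn i n).pd j).memLp 2) (z _ _) (hv2 i j)
    have t2 : Tendsto (fun n => ∑ i, ∫ x, ρ x ^ γ * pd (vn i n) i x) atTop
        (𝓝 (∑ i, ∫ x, ρ x ^ γ * d i i x)) :=
      tendsto_finsetSum _ fun i _ =>
        aux_tendsto_int_mul (p := 2) (q := 2) mp2 (hd i i) (fun _ => mp2)
          (fun n => ((hvn i n).pd i).memLp 2) (z _ _) (hv2 i i)
    have t3 : Tendsto (fun n => ∑ i, ∑ j, ∫ x, Smat μ η (fun a b => d a b x) i j * pd (vn i n) j x)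
        atTop (𝓝 (∑ i, ∑ j, ∫ x, Smat μ η (fun a b => d a b x) i j * d i j x)) :=
      tendsto_finsetSum _ fun i _ => tendsto_finsetSum _ fun j _ =>
        aux_tendsto_int_mul (p := 2) (q := 2) (mS i j) (hd i j) (fun _ => mS i j)
          (fun n => ((hvn i n).pd j).memLp 2) (z _ _) (hv2 i j)
    have t4 : Tendsto (fun n => ∑ i, ∫ x, ρ x * g i x * vn i n x) atTop
        (𝓝 (∑ i, ∫ x, ρ x * g i x * v i x)) :=
      tendsto_finsetSum _ fun i _ =>
        aux_tendsto_int_mul (p := 6/5) (q := 6) (mF i) (hv i) (fun _ => mF i)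
          (fun n => (hvn i n).memLp 6) (z _ _) (hv6 i)
    exact tendsto_nhds_unique ((t1.add t2).congr fun n => momS (fun i => vn i n) fun i => hvn i n)
      (t3.sub t4)
  have z : ∀ (f : E3 → ℝ) (p : ℝ≥0∞), Tendsto (fun _ : ℕ => eLpNorm (fun x => f x - f x) p volume)
        atTop (𝓝 0) := by
    intro f p; simp
  have E1 : ∑ i, ∫ x, ρ x * g i x * v i x = 0 := by
    have t : Tendsto (fun n => ∑ i, ∫ x, (ρ x * v i x) * pd (Gn n) i x) atTop
        (𝓝 (∑ i, ∫ x, (ρ x * v i x) * g i x)) :=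
      tendsto_finsetSum _ fun i _ =>
        aux_tendsto_int_mul (p := ENNReal.ofReal q') (q := ENNReal.ofReal q) (mρvq i) (hg i)
          (fun _ => mρvq i) (fun n => ((hGn n).pd i).memLp _) (z _ _) (hGq i)
    simp only [fun n => massS (Gn n) (hGn n)] at t
    rw [tendsto_nhds_unique tendsto_const_nhds t]
    refine Finset.sum_congr rfl fun i _ => integral_congr_ae (ae_of_all _ fun x => ?_)
    simp only; ring
  have E2 : ∀ i, ∑ j, ∫ x, ρ x * v i x * v j x * d i j x = 0 := by
    intro i
    have t : Tendsto (fun n => ∑ j, ∫ x, (ρ x * v j x * vn i n x) * pd (vn i n) j x) atTop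
        (𝓝 (∑ j, ∫ x, (ρ x * v j x * v i x) * d i j x)) := by
      refine tendsto_finsetSum _ fun j _ =>
        aux_tendsto_int_mul (p := 2) (q := 2) (mT j i) (hd i j)
          (fun n => memLp_mulA (p := 3) (q := 6) (mρv j) ((hvn i n).memLp _))
          (fun n => ((hvn i n).pd j).memLp _) ?_ (hv2 i j)
      exact aux_tendsto_eLpNorm_mul (p := 3) (q := 6) (r := 2) (mρv j) (hv i)
        (fun n => (hvn i n).memLp _) (hv6 i)
    have e : ∀ n, ∑ j, ∫ x, (ρ x * v j x * vn i n x) * pd (vn i n) j x = 0 := by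
      intro n
      have h := massS _ ((hvn i n).mul (hvn i n))
      have e2 : ∀ j, ∫ x, (ρ x * v j x) * pd (fun y => vn i n y * vn i n y) j x
          = 2 * ∫ x, (ρ x * v j x * vn i n x) * pd (vn i n) j x := by
        intro j
        rw [← integral_const_mul]
        refine integral_congr_ae (ae_of_all _ fun x => ?_)
        simp only [pd_mul (hvn i n).c1 (hvn i n).c1]; ring
      simp only [e2, ← Finset.mul_sum] at h
      linarith
    simp only [e] at t
    rw [tendsto_nhds_unique tendsto_const_nhds t]
    refine Finset.sum_congr rfl fun j _ => integral_congr_ae (ae_of_all _ fun x => ?_)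
    simp only; ring
  have E3' : ∑ i, ∫ x, ρ x ^ γ * d i i x = 0 := by
    have hKt : (∑ i, ∑ j, (eLpNorm (d i j) 2 volume + 1)) ≠ ∞ := by
      refine ENNReal.sum_ne_top.2 fun i _ => ENNReal.sum_ne_top.2 fun j _ => ?_
      exact ENNReal.add_ne_top.2 ⟨(hd i j).2.ne, by simp⟩
    refine renorm hγ hρm hρ6 hρ0 mp2 hvm hv (fun i => hd i i) hvn hv6 (fun i => hv2 i i) hKt ?_ massS
    intro i
    have : ∀ᶠ n in atTop, ∀ j, eLpNorm (fun x => pd (vn i n) j x - d i j x) 2 volume ≤ 1 := by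
      rw [eventually_all]
      intro j
      exact (hv2 i j).eventually (ge_mem_nhds (by simp))
    filter_upwards [this] with n hn
    calc ∑ j, eLpNorm (pd (vn i n) j) 2 volume ≤ ∑ j, (eLpNorm (d i j) 2 volume + 1) := by
          refine Finset.sum_le_sum fun j _ => ?_
          have e : pd (vn i n) j = d i j + fun x => pd (vn i n) j x - d i j x := by ext x; simp
          calc eLpNorm (pd (vn i n) j) 2 volume
              = eLpNorm (d i j + fun x => pd (vn i n) j x - d i j x) 2 volume := by rw [← e]
            _ ≤ eLpNorm (d i j) 2 volume + eLpNorm (fun x => pd (vn i n) j x - d i j x) 2 volume :=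
              eLpNorm_add_le (hd i j).1 ((((hvn i n).pd j).memLp 2).1.sub (hd i j).1) (by norm_num)
            _ ≤ _ := by gcongr; exact hn j
      _ ≤ _ := Finset.single_le_sum (f := fun i => ∑ j, (eLpNorm (d i j) 2 volume + 1))
          (fun _ _ => zero_le) (Finset.mem_univ i)
  refine vanish_of_energy hμ hη hv hd hvn hv6 hv2 ?_ mS i
  rw [E1, E3', Finset.sum_congr rfl fun i _ => E2 i] at hEn
  simpa using hEn.symm


/-- **Theorem 5.** Let `(ρ, u)` be a weak solution of the stationary isentropic system on `ℝ³`
with `γ ≥ 6` and `G ∈ D₀^{1,q}(ℝ³)` for some `6γ/(5γ−6) ≤ q ≤ 3/2`.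
If `ρ ∈ L⁶ ∩ L^γ(ℝ³)`, then `u = 0` a.e. -/
theorem liouville_isentropic_L6_Lgamma
    (μ η γ q : ℝ) (hμ : 0 < μ) (hη : 0 ≤ η) (hγ : 6 ≤ γ)
    (hq1 : 6 * γ / (5 * γ - 6) ≤ q) (hq2 : q ≤ 3 / 2)
    (G : E3 → ℝ) (dG : E3 → Fin 3 → ℝ)
    (ρ : E3 → ℝ) (u : E3 → Fin 3 → ℝ) (du : E3 → Fin 3 → Fin 3 → ℝ)
    (hG : MemD01q univ G dG q)
    (hsol : IsentropicWeakSolution μ η γ G dG ρ u du)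
    (hρ6 : MemLp ρ 6 volume) (hργ : MemLp ρ (ENNReal.ofReal γ) volume) :
    ∀ᵐ x, u x = 0 := by
  obtain ⟨-, hdG, Gn, hGn, hGq, -⟩ := hG
  obtain ⟨hρa, hua, -, hρ0, -, hmass, -, -, -, -, ⟨-, -, hdu, un, hun, hun2, hun6⟩, hmom⟩ := hsol
  simp only [Measure.restrict_univ] at hdG hGq hρ0 hmass hdu hun2 hun6 hmom
  -- representatives
  set ρ' : E3 → ℝ := fun x => max (hρa.mk ρ x) 0 with hρ'
  have eρ : ρ =ᵐ[volume] ρ' := by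
    filter_upwards [hρa.ae_eq_mk, hρ0] with x h1 h2
    simp only [hρ', ← h1, max_eq_left h2]
  set v : Fin 3 → E3 → ℝ := fun i x => hua.mk u x i with hv
  have ev : ∀ i, (fun x => u x i) =ᵐ[volume] v i := by
    intro i
    filter_upwards [hua.ae_eq_mk] with x h1
    simp only [hv, ← h1]
  have hvn : ∀ (i : Fin 3) n, IsTest univ (fun x => un n x i) := by
    intro i n
    refine ⟨contDiff_pi.1 (hun n).1 i, ?_, subset_univ _⟩
    exact (hun n).2.1.comp_left (g := fun w : Fin 3 → ℝ => w i) rfl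
  have hv6 : ∀ i, Tendsto (fun n => eLpNorm (fun x => un n x i - v i x) 6 volume) atTop (𝓝 0) := by
    intro i
    refine tendsto_of_tendsto_of_tendsto_of_le_of_le tendsto_const_nhds hun6 (fun _ => zero_le)
      fun n => ?_
    dsimp only
    have : (fun x => un n x i - v i x) =ᵐ[volume] fun x => (un n x - u x) i := by
      filter_upwards [ev i] with x hx
      simp only [Pi.sub_apply, ← hx]
    rw [eLpNorm_congr_ae this]
    exact eLpNorm_mono fun x => norm_le_pi_norm _ i
  have hvm : ∀ i, Measurable (v i) := fun i => (measurable_pi_apply i).comp hua.measurable_mk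
  have hvL : ∀ i, MemLp (v i) 6 := by
    intro i
    obtain ⟨n, hn⟩ := ((hv6 i).eventually (gt_mem_nhds (zero_lt_one))).exists
    have h1 : MemLp (fun x => un n x i - v i x) 6 :=
      ⟨((hvn i n).memLp 6).1.sub (hvm i).aestronglyMeasurable, hn.trans (by simp)⟩
    have h2 := ((hvn i n).memLp 6).sub h1
    refine h2.ae_eq (ae_of_all _ fun x => ?_)
    simp
  have hv2 : ∀ i j, Tendsto (fun n => eLpNorm (fun x => pd (fun y => un n y i) j x - du x i j) 2
      volume) atTop (𝓝 0) := by
    intro i j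
    refine tendsto_of_tendsto_of_tendsto_of_le_of_le tendsto_const_nhds hun2 (fun _ => zero_le)
      fun n => ?_
    refine eLpNorm_mono fun x => ?_
    exact (norm_le_pi_norm ((tgrad (un n) x - du x) i) j).trans
      (norm_le_pi_norm (tgrad (un n) x - du x) i)
  have hd : ∀ i j, MemLp (fun x => du x i j) 2 := fun i j =>
    ((hdu.eval i).eval j)
  have hg : ∀ i, MemLp (fun x => dG x i) (ENNReal.ofReal q) := fun i => hdG.eval i
  have hGq' : ∀ i, Tendsto (fun n => eLpNorm (fun x => pd (Gn n) i x - dG x i) (ENNReal.ofReal q)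
      volume) atTop (𝓝 0) := by
    intro i
    refine tendsto_of_tendsto_of_tendsto_of_le_of_le tendsto_const_nhds hGq (fun _ => zero_le)
      fun n => ?_
    refine eLpNorm_mono fun x => ?_
    exact norm_le_pi_norm ((fun i => pd (Gn n) i x) - dG x) i
  have key := core hμ hη hγ hq1 hq2 (ρ := ρ') (hρa.measurable_mk.max measurable_const)
    (fun x => le_max_right _ _) (hρ6.ae_eq eρ) (hργ.ae_eq eρ) hvm hvL hd hvn hv6 hv2 hg hGn hGq'
    ?_ ?_
  · have h : ∀ᵐ x, ∀ i, u x i = 0 := by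
      rw [ae_all_iff]
      intro i
      filter_upwards [ev i, key i] with x h1 h2
      rw [h1, h2]; rfl
    filter_upwards [h] with x hx
    ext i; exact hx i
  · intro φ hφ
    rw [← hmass φ hφ.1 hφ.2.1]
    refine integral_congr_ae ?_
    filter_upwards [eρ, ae_all_iff.2 ev] with x h1 h2
    simp only [h1, h2]
  · intro φ hφ
    have hc : HasCompactSupport (fun (x : E3) (i : Fin 3) => φ i x) := by
      rw [hasCompactSupport_def]
      refine IsCompact.of_isClosed_subset (isCompact_iUnion fun i => (hφ i).2.1) isClosed_closure ?_
      refine closure_minimal (fun x hx => ?_) (isClosed_iUnion_of_finite fun i => isClosed_tsupport _)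
      rw [Function.mem_support] at hx
      obtain ⟨i, hi⟩ := Function.ne_iff.1 hx
      exact mem_iUnion.2 ⟨i, subset_tsupport _ hi⟩
    have h := hmom (fun x i => φ i x) ⟨contDiff_pi.2 fun i => (hφ i).c1, hc, subset_univ _⟩
    have e1 : ∫ x, ((∑ i, ∑ j, ρ' x * v i x * v j x * pd (φ i) j x)
        + ρ' x ^ γ * (∑ i, pd (φ i) i x)) = _ := (integral_congr_ae (by
      filter_upwards [eρ, ae_all_iff.2 ev] with x h1 h2
      simp only [h1, h2]; rfl)).trans h
    rw [e1]
    congr 1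
    refine integral_congr_ae ?_
    filter_upwards [eρ] with x h1
    simp only [h1]
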